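/- arXiv:1609.02050 — 10 statements merged into one kernel-verified Lean document; each statement's English description precedes it below -/
import Mathlib

section
/- Let X ⊆ ℝ^d be a t-bonded set, x ∈ X, ρ > 0, and suppose X \ C_x(ρ) is nonempty. Then there exists a point x' ∈ C_x(ρ + t) \ C_x(ρ) that is joined to x by a t-chain all of whose points lie in C_x(ρ + t). -/
open Metric

/-- A Delone set in `ℝ^d` with parameters `r, R > 0`: every open ball of radius `r`
contains at most one point of `X` and every closed ball of radius `R` contains at
least one point of `X`. -/
def IsDeloneSet {d : ℕ} (X : Set (EuclideanSpace ℝ (Fin d))) (r R : ℝ) : Prop :=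
  0 < r ∧ 0 < R ∧
    (∀ c : EuclideanSpace ℝ (Fin d), (X ∩ Metric.ball c r).Subsingleton) ∧
    (∀ c : EuclideanSpace ℝ (Fin d), (X ∩ Metric.closedBall c R).Nonempty)

/-- A `t`-chain in `X` joining `x` to `x'`: a finite sequence of points of `X`
starting at `x`, ending at `x'`, with consecutive distances at most `t`. -/
def TChain {d : ℕ} (X : Set (EuclideanSpace ℝ (Fin d))) (t : ℝ)
    (x x' : EuclideanSpace ℝ (Fin d)) : Prop :=
  ∃ (m : ℕ) (c : ℕ → EuclideanSpace ℝ (Fin d)),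
    c 0 = x ∧ c m = x' ∧ (∀ i ≤ m, c i ∈ X) ∧
    ∀ i < m, dist (c i) (c (i + 1)) ≤ t

/-- `X` is uniformly discrete: some open ball radius `r > 0` so that every open
ball of radius `r` contains at most one point of `X`. -/
def UniformlyDiscrete {d : ℕ} (X : Set (EuclideanSpace ℝ (Fin d))) : Prop :=
  ∃ r > 0, ∀ c : EuclideanSpace ℝ (Fin d), (X ∩ Metric.ball c r).Subsingleton

/-- `X` is a `t`-bonded set: uniformly discrete, full affine span, and any two
points of `X` are joined by a `t`-chain in `X`. -/
def TBonded {d : ℕ} (X : Set (EuclideanSpace ℝ (Fin d))) (t : ℝ) : Prop :=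
  UniformlyDiscrete X ∧ affineSpan ℝ X = ⊤ ∧
    ∀ x ∈ X, ∀ x' ∈ X, TChain X t x x'

/-- The `ρ`-cluster of `X` centered at `x`: points of `X` at distance at most `ρ` from `x`. -/
def cluster {d : ℕ} (X : Set (EuclideanSpace ℝ (Fin d)))
    (x : EuclideanSpace ℝ (Fin d)) (ρ : ℝ) : Set (EuclideanSpace ℝ (Fin d)) :=
  X ∩ Metric.closedBall x ρ

/-- The symmetry group `S_x(ρ)` of the cluster `C_x(ρ)`: isometries of `ℝ^d`
fixing `x` and mapping the cluster onto itself. -/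
def symmGroup {d : ℕ} (X : Set (EuclideanSpace ℝ (Fin d)))
    (x : EuclideanSpace ℝ (Fin d)) (ρ : ℝ) :
    Set (EuclideanSpace ℝ (Fin d) ≃ᵢ EuclideanSpace ℝ (Fin d)) :=
  {s | s x = x ∧ s '' cluster X x ρ = cluster X x ρ}

/-- `Sym(X)`: the isometries of `ℝ^d` mapping `X` onto `X`. -/
def SymX {d : ℕ} (X : Set (EuclideanSpace ℝ (Fin d))) :
    Set (EuclideanSpace ℝ (Fin d) ≃ᵢ EuclideanSpace ℝ (Fin d)) :=
  {g | g '' X = X}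

/-- Equivalence of the clusters `C_x(ρ)` and `C_{x'}(ρ)`: some isometry of `ℝ^d`
sends `x` to `x'` and `C_x(ρ)` onto `C_{x'}(ρ)`. -/
def ClusterEquiv {d : ℕ} (X : Set (EuclideanSpace ℝ (Fin d))) (ρ : ℝ)
    (x x' : EuclideanSpace ℝ (Fin d)) : Prop :=
  ∃ g : EuclideanSpace ℝ (Fin d) ≃ᵢ EuclideanSpace ℝ (Fin d),
    g x = x' ∧ g '' cluster X x ρ = cluster X x' ρ

/-- The rank of the cluster `C_x(ρ)`: the dimension of its affine span. -/
noncomputable def clusterRank {d : ℕ} (X : Set (EuclideanSpace ℝ (Fin d)))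
    (x : EuclideanSpace ℝ (Fin d)) (ρ : ℝ) : ℕ :=
  Module.finrank ℝ (affineSpan ℝ (cluster X x ρ)).direction

/-! A chain from `x` to a point outside the ball of radius `ρ` leaves that ball by a first step.
Truncate it right after this step: its last point is within `t` of the ball, the others are in it.
-/

/-- Existence of a `t`-chain in `X` from `x` to `y`, in an arbitrary pseudometric space. The body
repeats that of `TChain`, so on `EuclideanSpace ℝ (Fin d)` the two are definitionally equal. -/
def JoinedByChain {α : Type*} [PseudoMetricSpace α] (X : Set α) (t : ℝ) (x y : α) : Prop :=
  ∃ (m : ℕ) (c : ℕ → α),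
    c 0 = x ∧ c m = y ∧ (∀ i ≤ m, c i ∈ X) ∧ ∀ i < m, dist (c i) (c (i + 1)) ≤ t

theorem exists_lt_forall_le_and_not_succ {p : ℕ → Prop} {m : ℕ} (h_zero : p 0) (hm : ¬p m) :
    ∃ k < m, (∀ i ≤ k, p i) ∧ ¬p (k + 1) := by
  have h_fail : ∃ n, ∃ i ≤ n, ¬p i := ⟨m, m, le_rfl, hm⟩
  obtain ⟨k, hk, j, hj, hpj⟩ := Nat.exists_not_and_succ_of_not_zero_of_exists
    (by simpa only [Nat.le_zero, exists_eq_left, not_not] using h_zero) h_fail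
  push Not at hk
  have hjk : j = k + 1 := le_antisymm hj (not_le.1 fun h => hpj (hk j h))
  exact ⟨k, not_le.1 fun h => hm (hk m h), hk, hjk ▸ hpj⟩

namespace JoinedByChain

variable {α : Type*} [PseudoMetricSpace α] {X Y B : Set α} {t : ℝ} {x y : α}

theorem right_mem (h : JoinedByChain X t x y) : y ∈ X := by
  obtain ⟨m, c, -, rfl, hc, -⟩ := h
  exact hc m le_rfl

theorem mono (hXY : X ⊆ Y) (h : JoinedByChain X t x y) : JoinedByChain Y t x y := by
  obtain ⟨m, c, hx, hy, hc, hstep⟩ := h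
  exact ⟨m, c, hx, hy, fun i hi => hXY (hc i hi), hstep⟩

theorem exists_notMem_joinedByChain_inter (h : JoinedByChain X t x y) (hx : x ∈ B) (hy : y ∉ B) :
    ∃ z ∉ B, JoinedByChain (X ∩ ⋃ b ∈ B, closedBall b t) t x z := by
  obtain ⟨m, c, rfl, rfl, hc, hstep⟩ := h
  obtain ⟨k, hkm, h_inside, h_exit⟩ :=
    exists_lt_forall_le_and_not_succ (p := fun i => c i ∈ B) hx hy
  have ht : 0 ≤ t := dist_nonneg.trans (hstep k hkm)
  have h_near : ∀ i ≤ k + 1, c i ∈ ⋃ b ∈ B, closedBall b t := by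
    intro i hi
    rcases Nat.le_succ_iff.1 hi with hik | rfl
    · exact Set.mem_biUnion (h_inside i hik) (mem_closedBall_self ht)
    · exact Set.mem_biUnion (h_inside k le_rfl) (mem_closedBall'.2 (hstep k hkm))
  exact ⟨c (k + 1), h_exit, k + 1, c, rfl, rfl,
    fun i hi => ⟨hc i (hi.trans hkm), h_near i hi⟩, fun i hi => hstep i (hi.trans_le hkm)⟩

end JoinedByChain

theorem biUnion_closedBall_subset_closedBall_add {α : Type*} [PseudoMetricSpace α]
    (x : α) (ρ t : ℝ) : ⋃ b ∈ closedBall x ρ, closedBall b t ⊆ closedBall x (ρ + t) :=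
  Set.iUnion₂_subset fun b hb => closedBall_subset_closedBall' <| by
    linarith [mem_closedBall.1 hb]

theorem exists_point_in_shell_chain_general {α : Type*} [PseudoMetricSpace α] {X : Set α}
    {t ρ : ℝ} {x y : α} (hρ : 0 ≤ ρ) (hxy : JoinedByChain X t x y) (hy : y ∉ closedBall x ρ) :
    ∃ x' ∈ (X ∩ closedBall x (ρ + t)) \ (X ∩ closedBall x ρ),
      JoinedByChain (X ∩ closedBall x (ρ + t)) t x x' := by
  obtain ⟨x', hx', h_chain⟩ :=
    hxy.exists_notMem_joinedByChain_inter (mem_closedBall_self hρ) hy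
  replace h_chain := h_chain.mono <|
    Set.inter_subset_inter_right X (biUnion_closedBall_subset_closedBall_add x ρ t)
  exact ⟨x', ⟨h_chain.right_mem, fun h => hx' h.2⟩, h_chain⟩

/-- If `X` is `t`-bonded and `X \ C_x(ρ)` is nonempty, there is a point
`x' ∈ C_x(ρ + t) \ C_x(ρ)` joined to `x` by a `t`-chain lying in `C_x(ρ + t)`. -/
theorem exists_point_in_shell_chain {d : ℕ} (X : Set (EuclideanSpace ℝ (Fin d)))
    (t : ℝ) (ht : 0 < t) (hX : TBonded X t)
    (x : EuclideanSpace ℝ (Fin d)) (hx : x ∈ X) (ρ : ℝ) (hρ : 0 < ρ)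
    (hne : (X \ cluster X x ρ).Nonempty) :
    ∃ x' ∈ cluster X x (ρ + t) \ cluster X x ρ,
      TChain (cluster X x (ρ + t)) t x x' := by
  obtain ⟨y, hyX, hy⟩ := hne
  exact exists_point_in_shell_chain_general hρ.le (hX.2.2 x hx y hyX) fun h => hy ⟨hyX, h⟩
end

section
/- Let X ⊆ ℝ^d be a t-bonded set, ρ > 0, and let x, x' ∈ X be two points with dist(x, x') ≤ t such that dim aff C_x(ρ) = dim aff C_x(ρ + t) and dim aff C_{x'}(ρ) = dim aff C_{x'}(ρ + t). Then the four affine spans coincide: aff C_x(ρ) = aff C_x(ρ + t) = aff C_{x'}(ρ) = aff C_{x'}(ρ + t). -/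
open Metric

/-!
Since `dist x x' ≤ t`, the cluster `C_x(ρ)` is contained in `C_{x'}(ρ + t)`, whose span is that of
`C_{x'}(ρ)` because the two nested spans are nonempty and have the same finite dimension.
Exchanging `x` and `x'` gives the reverse inclusion.
-/

section

variable {k V P : Type*} [DivisionRing k] [AddCommGroup V] [Module k V]

theorem affineSpan_eq_of_subset_of_finrank_direction_eq [AddTorsor V P] {s t : Set P}
    [FiniteDimensional k (affineSpan k t).direction] (hs : s.Nonempty) (hst : s ⊆ t)
    (h : Module.finrank k (affineSpan k s).direction =
      Module.finrank k (affineSpan k t).direction) :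
    affineSpan k s = affineSpan k t := by
  have hle : affineSpan k s ≤ affineSpan k t := affineSpan_mono k hst
  have hdir : (affineSpan k s).direction = (affineSpan k t).direction :=
    Submodule.eq_of_le_of_finrank_eq (AffineSubspace.direction_le hle) h
  exact AffineSubspace.eq_of_direction_eq_of_nonempty_of_le hdir (hs.affineSpan k) hle

variable [PseudoMetricSpace P] {X : Set P} {t ρ : ℝ} {x x' : P}

theorem inter_closedBall_subset_inter_closedBall_add (hdist : dist x x' ≤ t) :
    X ∩ closedBall x ρ ⊆ X ∩ closedBall x' (ρ + t) :=
  Set.inter_subset_inter_right X (closedBall_subset_closedBall' (by gcongr))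

theorem affineSpan_cluster_eq_of_rank_stable_general [AddTorsor V P]
    [FiniteDimensional k (affineSpan k (X ∩ closedBall x (ρ + t))).direction]
    [FiniteDimensional k (affineSpan k (X ∩ closedBall x' (ρ + t))).direction]
    (hx : (X ∩ closedBall x ρ).Nonempty) (hx' : (X ∩ closedBall x' ρ).Nonempty)
    (hdist : dist x x' ≤ t)
    (h1 : Module.finrank k (affineSpan k (X ∩ closedBall x ρ)).direction =
      Module.finrank k (affineSpan k (X ∩ closedBall x (ρ + t))).direction)
    (h2 : Module.finrank k (affineSpan k (X ∩ closedBall x' ρ)).direction =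
      Module.finrank k (affineSpan k (X ∩ closedBall x' (ρ + t))).direction) :
    affineSpan k (X ∩ closedBall x ρ) = affineSpan k (X ∩ closedBall x (ρ + t)) ∧
    affineSpan k (X ∩ closedBall x ρ) = affineSpan k (X ∩ closedBall x' ρ) ∧
    affineSpan k (X ∩ closedBall x' ρ) = affineSpan k (X ∩ closedBall x' (ρ + t)) := by
  have ht : 0 ≤ t := dist_nonneg.trans hdist
  have span_x : affineSpan k (X ∩ closedBall x ρ) = affineSpan k (X ∩ closedBall x (ρ + t)) :=
    affineSpan_eq_of_subset_of_finrank_direction_eq hx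
      (inter_closedBall_subset_inter_closedBall_add (by rwa [dist_self])) h1
  have span_x' : affineSpan k (X ∩ closedBall x' ρ) = affineSpan k (X ∩ closedBall x' (ρ + t)) :=
    affineSpan_eq_of_subset_of_finrank_direction_eq hx'
      (inter_closedBall_subset_inter_closedBall_add (by rwa [dist_self])) h2
  have le_x' : affineSpan k (X ∩ closedBall x ρ) ≤ affineSpan k (X ∩ closedBall x' (ρ + t)) :=
    affineSpan_mono k (inter_closedBall_subset_inter_closedBall_add hdist)
  have le_x : affineSpan k (X ∩ closedBall x' ρ) ≤ affineSpan k (X ∩ closedBall x (ρ + t)) :=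
    affineSpan_mono k (inter_closedBall_subset_inter_closedBall_add (by rwa [dist_comm]))
  exact ⟨span_x, le_antisymm (le_x'.trans_eq span_x'.symm) (le_x.trans_eq span_x.symm), span_x'⟩

end

/-- If `x, x' ∈ X` with `dist x x' ≤ t` and the cluster ranks stabilize
from `ρ` to `ρ + t` at both points, then all four affine spans coincide. -/
theorem affineSpan_cluster_eq_of_rank_stable {d : ℕ}
    (X : Set (EuclideanSpace ℝ (Fin d))) (t : ℝ) (ht : 0 < t) (hX : TBonded X t)
    (ρ : ℝ) (hρ : 0 < ρ) (x x' : EuclideanSpace ℝ (Fin d))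
    (hx : x ∈ X) (hx' : x' ∈ X) (hdist : dist x x' ≤ t)
    (h1 : clusterRank X x ρ = clusterRank X x (ρ + t))
    (h2 : clusterRank X x' ρ = clusterRank X x' (ρ + t)) :
    affineSpan ℝ (cluster X x ρ) = affineSpan ℝ (cluster X x (ρ + t)) ∧
    affineSpan ℝ (cluster X x ρ) = affineSpan ℝ (cluster X x' ρ) ∧
    affineSpan ℝ (cluster X x' ρ) = affineSpan ℝ (cluster X x' (ρ + t)) := by
  exact affineSpan_cluster_eq_of_rank_stable_general ⟨x, hx, mem_closedBall_self hρ.le⟩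
    ⟨x', hx', mem_closedBall_self hρ.le⟩ hdist h1 h2
end

section
/- Let X ⊆ ℝ^d be a t-bonded set and suppose there exists ρ > 0 such that for every point x ∈ X one has dim aff C_x(ρ) = dim aff C_x(ρ + t). Then for every x ∈ X, aff C_x(ρ) = ℝ^d; in particular dim aff C_x(ρ) = d for all x ∈ X. -/
open Metric

/-!
If `x ∈ X` and `dist x y ≤ t`, then `C_y(ρ) ⊆ C_x(ρ + t)`. The nested affine spans of `C_x(ρ)` and
`C_x(ρ + t)` have equal dimension, hence coincide, so `aff C_y(ρ) ≤ aff C_x(ρ)`. Following chains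
starting at `x`, every point of `X` lies in `aff C_x(ρ)`, which therefore contains `aff X`.
-/

theorem affineSubspace_eq_of_le_of_finrank_direction_eq {k V P : Type*} [DivisionRing k]
    [AddCommGroup V] [Module k V] [AddTorsor V P] {S T : AffineSubspace k P}
    [FiniteDimensional k T.direction] (hS : (S : Set P).Nonempty) (hST : S ≤ T)
    (hrank : Module.finrank k S.direction = Module.finrank k T.direction) : S = T :=
  AffineSubspace.eq_of_direction_eq_of_nonempty_of_le
    (Submodule.eq_of_le_of_finrank_eq (AffineSubspace.direction_le hST) hrank) hS hST

/-- Adjacency in the bond graph of `X`: two points of `X` at distance at most `t`. The `t`-chains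
in `X` are the finite walks in this graph, so `Relation.ReflTransGen (Bond X t) x y` says that `x`
and `y` are joined by one. -/
def Bond {P : Type*} [PseudoMetricSpace P] (X : Set P) (t : ℝ) (x y : P) : Prop :=
  x ∈ X ∧ y ∈ X ∧ dist x y ≤ t

section AffineSpan

variable {k V P : Type*} [Ring k] [AddCommGroup V] [Module k V] [PseudoMetricSpace P]
  [AddTorsor V P] {X : Set P} {x y : P} {t ρ : ℝ}

theorem mem_affineSpan_inter_closedBall_self (hρ : 0 ≤ ρ) (hx : x ∈ X) :
    x ∈ affineSpan k (X ∩ closedBall x ρ) :=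
  mem_affineSpan k ⟨hx, mem_closedBall_self hρ⟩

theorem affineSpan_inter_closedBall_le_of_dist_le
    (hstable : affineSpan k (X ∩ closedBall x ρ) = affineSpan k (X ∩ closedBall x (ρ + t)))
    (hxy : dist x y ≤ t) :
    affineSpan k (X ∩ closedBall y ρ) ≤ affineSpan k (X ∩ closedBall x ρ) := by
  have hball : closedBall y ρ ⊆ closedBall x (ρ + t) :=
    closedBall_subset_closedBall' (by rw [dist_comm]; gcongr)
  rw [hstable]
  exact affineSpan_mono k (Set.inter_subset_inter_right X hball)

theorem affineSpan_inter_closedBall_le_of_reflTransGen_bond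
    (hstable : ∀ x ∈ X,
      affineSpan k (X ∩ closedBall x ρ) = affineSpan k (X ∩ closedBall x (ρ + t)))
    (hxy : Relation.ReflTransGen (Bond X t) x y) :
    affineSpan k (X ∩ closedBall y ρ) ≤ affineSpan k (X ∩ closedBall x ρ) := by
  induction hxy with
  | refl => exact le_rfl
  | tail _ hbond ih =>
    exact (affineSpan_inter_closedBall_le_of_dist_le (hstable _ hbond.1) hbond.2.2).trans ih

theorem affineSpan_inter_closedBall_eq_top_of_stable (hρ : 0 ≤ ρ) (hspan : affineSpan k X = ⊤)
    (hchain : ∀ y ∈ X, Relation.ReflTransGen (Bond X t) x y)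
    (hstable : ∀ x ∈ X,
      affineSpan k (X ∩ closedBall x ρ) = affineSpan k (X ∩ closedBall x (ρ + t))) :
    affineSpan k (X ∩ closedBall x ρ) = ⊤ := by
  rw [eq_top_iff, ← hspan, affineSpan_le]
  intro y hy
  exact affineSpan_inter_closedBall_le_of_reflTransGen_bond hstable (hchain y hy)
    (mem_affineSpan_inter_closedBall_self hρ hy)

end AffineSpan

theorem affineSpan_cluster_eq_top_of_rank_stable_general {k V P : Type*} [DivisionRing k]
    [AddCommGroup V] [Module k V] [FiniteDimensional k V] [PseudoMetricSpace P] [AddTorsor V P]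
    {X : Set P} {t ρ : ℝ} (ht : 0 ≤ t) (hρ : 0 ≤ ρ) (hspan : affineSpan k X = ⊤)
    (hchain : ∀ x ∈ X, ∀ y ∈ X, Relation.ReflTransGen (Bond X t) x y)
    (hrank : ∀ x ∈ X, Module.finrank k (affineSpan k (X ∩ closedBall x ρ)).direction =
      Module.finrank k (affineSpan k (X ∩ closedBall x (ρ + t))).direction) :
    ∀ x ∈ X, affineSpan k (X ∩ closedBall x ρ) = ⊤ ∧
      Module.finrank k (affineSpan k (X ∩ closedBall x ρ)).direction = Module.finrank k V := by
  have hle : ∀ x, affineSpan k (X ∩ closedBall x ρ) ≤ affineSpan k (X ∩ closedBall x (ρ + t)) :=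
    fun x => affineSpan_mono k (Set.inter_subset_inter_right X
      (closedBall_subset_closedBall (le_add_of_nonneg_right ht)))
  have hstable : ∀ x ∈ X,
      affineSpan k (X ∩ closedBall x ρ) = affineSpan k (X ∩ closedBall x (ρ + t)) := fun x hx =>
    affineSubspace_eq_of_le_of_finrank_direction_eq
      ⟨x, mem_affineSpan_inter_closedBall_self hρ hx⟩ (hle x) (hrank x hx)
  intro x hx
  have htop : affineSpan k (X ∩ closedBall x ρ) = ⊤ :=
    affineSpan_inter_closedBall_eq_top_of_stable hρ hspan (hchain x hx) hstable
  exact ⟨htop, by rw [htop, AffineSubspace.direction_top, finrank_top]⟩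

theorem TChain.reflTransGen_bond {d : ℕ} {X : Set (EuclideanSpace ℝ (Fin d))} {t : ℝ}
    {x y : EuclideanSpace ℝ (Fin d)} (h : TChain X t x y) :
    Relation.ReflTransGen (Bond X t) x y := by
  obtain ⟨m, c, rfl, rfl, hc, hdist⟩ := h
  have hsucc : ∀ i ∈ Set.Ico 0 m, Bond X t (c i) (c (i + 1)) := fun i hi =>
    ⟨hc i hi.2.le, hc (i + 1) hi.2, hdist i hi.2⟩
  exact (reflTransGen_of_succ_of_le (fun i j => Bond X t (c i) (c j)) hsucc m.zero_le).lift c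
    fun _ _ => id

/-- If for some `ρ > 0` the rank of every cluster stabilizes from `ρ`
to `ρ + t`, then every `ρ`-cluster has full affine span `ℝ^d`, in particular rank `d`. -/
theorem affineSpan_cluster_eq_top_of_rank_stable {d : ℕ}
    (X : Set (EuclideanSpace ℝ (Fin d))) (t : ℝ) (ht : 0 < t) (hX : TBonded X t)
    (ρ : ℝ) (hρ : 0 < ρ)
    (h : ∀ x ∈ X, clusterRank X x ρ = clusterRank X x (ρ + t)) :
    ∀ x ∈ X, affineSpan ℝ (cluster X x ρ) = ⊤ ∧ clusterRank X x ρ = d := fun x hx =>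
  (affineSpan_cluster_eq_top_of_rank_stable_general ht.le hρ.le hX.2.1
    (fun x hx y hy => (hX.2.2 x hx y hy).reflTransGen_bond) h x hx).imp_right
      (·.trans finrank_euclideanSpace_fin)
end

section
/- Let X ⊆ ℝ^d be a t-bonded set such that for every ρ with 0 < ρ ≤ t·(d − 1) the rank dim aff C_x(ρ) is the same for all points x ∈ X. Then for every ρ' ≥ d·t and every x ∈ X, dim aff C_x(ρ') = d. -/
open Metric

/-!
If all `r`-clusters of `X` have the same rank `m`, smaller than the rank of `X`, their affine spans
cannot all agree. Since `X` is `t`-connected, some points `y ≠ z` at distance at most `t` then have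
clusters `C_y(r)` and `C_z(r)` with different affine spans, so the rank of `C_y(r) ∩ C_z(r)` is
strictly less than `m`. For `r = t` this intersection contains `y` and `z`, so `m ≥ 2`; for
`r = (j + 1) t` it contains `C_y(j t)`, so `m` exceeds the rank of `C_y(j t)`. Inductively,
`j t`-clusters have rank at least `j + 1` whenever `0 < j < n`, where `n` is the rank of `X`. The
case `j = n - 1` gives full rank if `n ≥ 2`; if `n = 1`, every `t`-cluster already has two points.
-/

open Module

section AffineRank

variable (K : Type*) {V P : Type*} [DivisionRing K] [AddCommGroup V] [Module K V] [AddTorsor V P]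

/-- The rank of a set of points: the dimension of its affine span. Being a `finrank`, it is `0` when
the affine span is infinite-dimensional. -/
noncomputable def affineRank (s : Set P) : ℕ :=
  finrank K (vectorSpan K s)

instance finiteDimensional_vectorSpan_inter (s u : Set P) [FiniteDimensional K (vectorSpan K s)] :
    FiniteDimensional K (vectorSpan K (s ∩ u)) :=
  Submodule.finiteDimensional_of_le (vectorSpan_mono K Set.inter_subset_left)

theorem affineRank_eq_finrank_of_affineSpan_eq_top {s : Set P} (hs : affineSpan K s = ⊤) :
    affineRank K s = finrank K V := by
  rw [affineRank, AffineSubspace.vectorSpan_eq_top_of_affineSpan_eq_top K V P hs, finrank_top]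

variable {K}

theorem affineRank_mono {s u : Set P} [FiniteDimensional K (vectorSpan K u)] (hsu : s ⊆ u) :
    affineRank K s ≤ affineRank K u :=
  Submodule.finrank_mono (vectorSpan_mono K hsu)

theorem affineRank_pos {s : Set P} [FiniteDimensional K (vectorSpan K s)] (hs : s.Nontrivial) :
    0 < affineRank K s := by
  rw [affineRank, Nat.pos_iff_ne_zero, Ne, Submodule.finrank_eq_zero,
    vectorSpan_eq_bot_iff_subsingleton, Set.not_subsingleton_iff]
  exact hs

theorem nontrivial_of_affineRank_pos {s : Set P} (hs : 0 < affineRank K s) : s.Nontrivial := by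
  by_contra h
  rw [affineRank, vectorSpan_of_subsingleton K (Set.not_nontrivial_iff.1 h), finrank_bot] at hs
  exact hs.false

theorem affineSpan_eq_of_subset_of_affineRank_le {s u : Set P}
    [FiniteDimensional K (vectorSpan K u)] (hsu : s ⊆ u) (hs : s.Nonempty)
    (hr : affineRank K u ≤ affineRank K s) : affineSpan K s = affineSpan K u := by
  refine AffineSubspace.eq_of_direction_eq_of_nonempty_of_le ?_ ((affineSpan_nonempty K).2 hs)
    (affineSpan_mono K hsu)
  rw [direction_affineSpan, direction_affineSpan]
  exact Submodule.eq_of_le_of_finrank_le (vectorSpan_mono K hsu) hr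

theorem affineRank_le_of_subset_affineSpan {s u : Set P} [FiniteDimensional K (vectorSpan K u)]
    (h : s ⊆ affineSpan K u) : affineRank K s ≤ affineRank K u := by
  refine Submodule.finrank_mono ?_
  simpa only [direction_affineSpan] using AffineSubspace.direction_le (affineSpan_le.2 h)

end AffineRank

section ChainConnected

variable {P : Type*} [PseudoMetricSpace P] {X : Set P} {t : ℝ}

/-- Any two points of `X` are joined by a `t`-chain in `X`. Chains are encoded as the reflexive
transitive closure of the relation of being at distance at most `t` within `X`. -/
def ChainConnected (X : Set P) (t : ℝ) : Prop :=
  ∀ x ∈ X, ∀ x' ∈ X, Relation.ReflTransGen (fun y z => y ∈ X ∧ z ∈ X ∧ dist y z ≤ t) x x'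

namespace ChainConnected

theorem exists_dist_le_and_ne (hX : ChainConnected X t) {α : Type*} {f : P → α} {x x' : P}
    (hx : x ∈ X) (hx' : x' ∈ X) (hne : f x ≠ f x') :
    ∃ y ∈ X, ∃ z ∈ X, dist y z ≤ t ∧ f y ≠ f z := by
  by_contra! hf
  have heq : ∀ {w}, Relation.ReflTransGen (fun y z => y ∈ X ∧ z ∈ X ∧ dist y z ≤ t) x w →
      f x = f w := by
    intro w hw
    induction hw with
    | refl => rfl
    | tail _ hstep ih =>
      obtain ⟨hy, hz, hdist⟩ := hstep
      exact ih.trans (hf _ hy _ hz hdist)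
  exact hne (heq (hX x hx x' hx'))

theorem nontrivial_inter_closedBall (hX : ChainConnected X t) (ht : 0 ≤ t) (hX' : X.Nontrivial)
    {x : P} (hx : x ∈ X) : (X ∩ closedBall x t).Nontrivial := by
  obtain ⟨x', hx', hne⟩ := hX'.exists_ne x
  obtain ⟨y, hy, z, hz, hdist, hyz⟩ :=
    hX.exists_dist_le_and_ne (f := (· = x)) hx hx' (by simp [hne])
  rcases eq_or_ne y x with rfl | hyx
  · have hzy : z ≠ y := by simpa using hyz
    exact ⟨y, ⟨hy, mem_closedBall_self ht⟩, z, ⟨hz, mem_closedBall'.2 hdist⟩, hzy.symm⟩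
  · obtain rfl : z = x := by simpa [hyx] using hyz
    exact ⟨y, ⟨hy, hdist⟩, z, ⟨hz, mem_closedBall_self ht⟩, hyx⟩

variable {K V : Type*} [DivisionRing K] [AddCommGroup V] [Module K V] [AddTorsor V P]
  [FiniteDimensional K (vectorSpan K X)]

theorem exists_affineRank_inter_closedBall_lt (hX : ChainConnected X t) {r : ℝ} (hr : 0 ≤ r)
    (htr : t ≤ r) {m : ℕ} (hm : ∀ x ∈ X, affineRank K (X ∩ closedBall x r) = m)
    (hlt : m < affineRank K X) :
    ∃ y ∈ X, ∃ z ∈ X, dist y z ≤ t ∧ y ≠ z ∧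
      affineRank K (X ∩ (closedBall y r ∩ closedBall z r)) < m := by
  obtain ⟨x, hx⟩ := (nontrivial_of_affineRank_pos (m.zero_le.trans_lt hlt)).nonempty
  obtain ⟨x', hx', hne⟩ : ∃ x' ∈ X,
      affineSpan K (X ∩ closedBall x r) ≠ affineSpan K (X ∩ closedBall x' r) := by
    by_contra! heq
    refine hlt.not_ge (hm x hx ▸ affineRank_le_of_subset_affineSpan fun x' hx' => ?_)
    rw [heq x' hx']
    exact subset_affineSpan K _ ⟨hx', mem_closedBall_self hr⟩
  obtain ⟨y, hy, z, hz, hdist, hyz⟩ :=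
    hX.exists_dist_le_and_ne (f := fun x => affineSpan K (X ∩ closedBall x r)) hx hx' hne
  refine ⟨y, hy, z, hz, hdist, fun h => hyz (h ▸ rfl), lt_of_not_ge fun hle => hyz ?_⟩
  have hnonempty : (X ∩ (closedBall y r ∩ closedBall z r)).Nonempty :=
    ⟨y, hy, mem_closedBall_self hr, hdist.trans htr⟩
  calc affineSpan K (X ∩ closedBall y r)
      = affineSpan K (X ∩ (closedBall y r ∩ closedBall z r)) :=
        (affineSpan_eq_of_subset_of_affineRank_le
          (Set.inter_subset_inter_right X Set.inter_subset_left) hnonempty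
          ((hm y hy).trans_le hle)).symm
    _ = affineSpan K (X ∩ closedBall z r) :=
        affineSpan_eq_of_subset_of_affineRank_le
          (Set.inter_subset_inter_right X Set.inter_subset_right) hnonempty
          ((hm z hz).trans_le hle)

theorem two_le_affineRank_closedBall (hX : ChainConnected X t) (ht : 0 ≤ t)
    (h : ∀ x ∈ X, ∀ x' ∈ X,
      affineRank K (X ∩ closedBall x t) = affineRank K (X ∩ closedBall x' t))
    (hrank : 2 ≤ affineRank K X) {x : P} (hx : x ∈ X) :
    2 ≤ affineRank K (X ∩ closedBall x t) := by
  by_contra! hlt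
  obtain ⟨y, hy, z, hz, hdist, hyz, hlt'⟩ := hX.exists_affineRank_inter_closedBall_lt ht le_rfl
    (fun x' hx' => h x' hx' x hx) (hlt.trans_le hrank)
  have hpos : 0 < affineRank K (X ∩ (closedBall y t ∩ closedBall z t)) :=
    affineRank_pos ⟨y, ⟨hy, mem_closedBall_self ht, hdist⟩,
      z, ⟨hz, mem_closedBall'.2 hdist, mem_closedBall_self ht⟩, hyz⟩
  lia

theorem lt_affineRank_closedBall_add (hX : ChainConnected X t) (ht : 0 ≤ t) {r : ℝ} (hr : 0 ≤ r)
    (h : ∀ x ∈ X, ∀ x' ∈ X,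
      affineRank K (X ∩ closedBall x (r + t)) = affineRank K (X ∩ closedBall x' (r + t)))
    {m : ℕ} (hm : ∀ x ∈ X, m ≤ affineRank K (X ∩ closedBall x r)) (hrank : m < affineRank K X)
    {x : P} (hx : x ∈ X) : m < affineRank K (X ∩ closedBall x (r + t)) := by
  by_contra! hle
  obtain ⟨y, hy, z, -, hdist, -, hlt⟩ := hX.exists_affineRank_inter_closedBall_lt (add_nonneg hr ht)
    (le_add_of_nonneg_left hr) (fun x' hx' => h x' hx' x hx) (hle.trans_lt hrank)
  have hsub : X ∩ closedBall y r ⊆ X ∩ (closedBall y (r + t) ∩ closedBall z (r + t)) :=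
    Set.inter_subset_inter_right X <| Set.subset_inter
      (closedBall_subset_closedBall (le_add_of_nonneg_right ht))
      (closedBall_subset_closedBall' (by gcongr))
  exact ((hm y hy).trans (affineRank_mono hsub)).not_gt (hlt.trans_le hle)

theorem lt_affineRank_closedBall_mul (hX : ChainConnected X t) (ht : 0 ≤ t)
    (h : ∀ j : ℕ, 0 < j → j < affineRank K X → ∀ x ∈ X, ∀ x' ∈ X,
      affineRank K (X ∩ closedBall x (j * t)) = affineRank K (X ∩ closedBall x' (j * t)))
    {j : ℕ} (hj : 0 < j) (hrank : j < affineRank K X) :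
    ∀ x ∈ X, j < affineRank K (X ∩ closedBall x (j * t)) := by
  induction j, hj using Nat.le_induction with
  | base =>
    intro x hx
    have h₁ := h 1 one_pos hrank
    simp only [Nat.cast_one, one_mul] at h₁ ⊢
    exact hX.two_le_affineRank_closedBall ht h₁ hrank hx
  | succ j hj ih =>
    intro x hx
    have hsucc := h (j + 1) j.succ_pos hrank
    simp only [Nat.cast_succ, add_one_mul] at hsucc ⊢
    exact hX.lt_affineRank_closedBall_add ht (by positivity) hsucc (ih (by lia)) hrank hx

end ChainConnected

theorem clusterRank_eq_dim_of_equal_ranks_general {K V P : Type*} [DivisionRing K]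
    [AddCommGroup V] [Module K V] [PseudoMetricSpace P] [AddTorsor V P] {X : Set P} {t : ℝ}
    [FiniteDimensional K (vectorSpan K X)] (ht : 0 ≤ t) (hX : ChainConnected X t)
    (h : ∀ j : ℕ, 0 < j → j < affineRank K X → ∀ x ∈ X, ∀ x' ∈ X,
      affineRank K (X ∩ closedBall x (j * t)) = affineRank K (X ∩ closedBall x' (j * t)))
    {ρ : ℝ} (hρ : ((affineRank K X : ℝ) - 1) * t ≤ ρ) (hρ_one : affineRank K X = 1 → t ≤ ρ)
    {x : P} (hx : x ∈ X) : affineRank K (X ∩ closedBall x ρ) = affineRank K X := by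
  refine le_antisymm (affineRank_mono Set.inter_subset_left) ?_
  rcases hn : affineRank K X with _ | _ | n
  · exact Nat.zero_le _
  · have hX' : X.Nontrivial := nontrivial_of_affineRank_pos (K := K) (by lia)
    exact affineRank_pos <| (hX.nontrivial_inter_closedBall ht hX' hx).mono <|
      Set.inter_subset_inter_right X (closedBall_subset_closedBall (hρ_one hn))
  · have hle : ((n + 1 : ℕ) : ℝ) * t ≤ ρ := by simpa [hn] using hρ
    calc n + 2 ≤ affineRank K (X ∩ closedBall x ((n + 1 : ℕ) * t)) :=
          hX.lt_affineRank_closedBall_mul ht h n.succ_pos (by lia) x hx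
      _ ≤ affineRank K (X ∩ closedBall x ρ) :=
          affineRank_mono (Set.inter_subset_inter_right X (closedBall_subset_closedBall hle))

end ChainConnected

section EuclideanSpace

variable {d : ℕ} {X : Set (EuclideanSpace ℝ (Fin d))} {t : ℝ}

theorem clusterRank_eq_affineRank (x : EuclideanSpace ℝ (Fin d)) (ρ : ℝ) :
    clusterRank X x ρ = affineRank ℝ (X ∩ closedBall x ρ) := by
  rw [clusterRank, direction_affineSpan, cluster, affineRank]

theorem TBonded.chainConnected (hX : TBonded X t) : ChainConnected X t := by
  intro x hx x' hx'
  obtain ⟨m, c, rfl, rfl, hc, hdist⟩ := hX.2.2 x hx x' hx'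
  have hchain := reflTransGen_of_succ_of_le (fun i j => c i ∈ X ∧ c j ∈ X ∧ dist (c i) (c j) ≤ t)
    (fun i hi => ⟨hc i hi.2.le, hc (i + 1) hi.2, hdist i hi.2⟩) m.zero_le
  exact hchain.lift c fun _ _ => id

theorem TBonded.affineRank_eq (hX : TBonded X t) : affineRank ℝ X = d := by
  rw [affineRank_eq_finrank_of_affineSpan_eq_top ℝ hX.2.1, finrank_euclideanSpace_fin]

end EuclideanSpace

/-- If for every `ρ` with `0 < ρ ≤ t (d - 1)` all `ρ`-clusters of `X`
have the same rank, then every cluster of radius `ρ' ≥ d t` has rank `d`. -/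
theorem clusterRank_eq_dim_of_equal_ranks {d : ℕ}
    (X : Set (EuclideanSpace ℝ (Fin d))) (t : ℝ) (ht : 0 < t) (hX : TBonded X t)
    (h : ∀ ρ : ℝ, 0 < ρ → ρ ≤ t * ((d : ℝ) - 1) →
      ∀ x ∈ X, ∀ x' ∈ X, clusterRank X x ρ = clusterRank X x' ρ) :
    ∀ ρ' : ℝ, (d : ℝ) * t ≤ ρ' → ∀ x ∈ X, clusterRank X x ρ' = d := by
  intro ρ' hρ' x hx
  have hrank := hX.affineRank_eq
  rw [clusterRank_eq_affineRank]
  refine (clusterRank_eq_dim_of_equal_ranks_general ht.le hX.chainConnected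
    (fun j hj hjd y hy y' hy' => ?_) ?_ (fun hd => ?_) hx).trans hrank
  · have hjd' : (j : ℝ) + 1 ≤ d := mod_cast hrank ▸ hjd
    simpa only [clusterRank_eq_affineRank] using
      h (j * t) (by positivity) (by nlinarith) y hy y' hy'
  · rw [hrank]
    linarith
  · simpa [hrank.symm.trans hd] using hρ'
end

section
/- Let t > 0 and let X ⊆ ℝ^d be a set with at least two points such that any two points of X are joined by a t-chain in X, and suppose that for every x ∈ X the cluster C_x(t) is contained in a line (i.e., dim aff C_x(t) ≤ 1). Then all points of X lie on a single line. -/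
open Metric

/-! The line spanned by the cluster at `x` does not change along a chain: if `x ≠ y` are at distance
at most `t`, then the clusters at `x` and `y` both contain `x` and `y`, and a collinear set spans
the line through any two of its distinct points. Hence all points lie in the affine span of one
cluster. -/

open Relation

section Collinear

variable {k V P : Type*} [DivisionRing k] [AddCommGroup V] [Module k V] [AddTorsor V P]
  {s₁ s₂ : Set P}

theorem collinear_coe_affineSpan (h : Collinear k s₁) : Collinear k (affineSpan k s₁ : Set P) := by
  rwa [Collinear, ← direction_affineSpan, AffineSubspace.affineSpan_coe, direction_affineSpan]

theorem affineSpan_eq_of_collinear_of_nontrivial_inter (h₁ : Collinear k s₁) (h₂ : Collinear k s₂)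
    (h : (s₁ ∩ s₂).Nontrivial) : affineSpan k s₁ = affineSpan k s₂ := by
  obtain ⟨p, ⟨hp₁, hp₂⟩, q, ⟨hq₁, hq₂⟩, hpq⟩ := h
  rw [← h₁.affineSpan_eq_of_ne hp₁ hq₁ hpq, h₂.affineSpan_eq_of_ne hp₂ hq₂ hpq]

end Collinear

section Chain

variable {P : Type*} [PseudoMetricSpace P] {X : Set P} {t : ℝ} {x y : P}

/-- A single step of a `t`-chain in a subset `X` of a metric space, both of whose ends are required
to lie in `X`. The `t`-chains are the paths of this relation, so that `ReflTransGen (ChainStep X t)`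
expresses that two points are joined by a `t`-chain. -/
def ChainStep (X : Set P) (t : ℝ) (x y : P) : Prop :=
  x ∈ X ∧ y ∈ X ∧ dist x y ≤ t

theorem ChainStep.pair_subset_inter (h : ChainStep X t x y) :
    {x, y} ⊆ (X ∩ closedBall x t) ∩ (X ∩ closedBall y t) := by
  obtain ⟨hx, hy, hxy⟩ := h
  have ht : 0 ≤ t := dist_nonneg.trans hxy
  rintro z (rfl | rfl)
  · exact ⟨⟨hx, mem_closedBall_self ht⟩, hx, hxy⟩
  · exact ⟨⟨hy, mem_closedBall'.2 hxy⟩, hy, mem_closedBall_self ht⟩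

variable {k V : Type*} [DivisionRing k] [AddCommGroup V] [Module k V] [AddTorsor V P]

theorem ChainStep.affineSpan_inter_closedBall_eq (h : ChainStep X t x y)
    (hcol : ∀ z ∈ X, Collinear k (X ∩ closedBall z t)) :
    affineSpan k (X ∩ closedBall x t) = affineSpan k (X ∩ closedBall y t) := by
  obtain rfl | hxy := eq_or_ne x y
  · rfl
  · exact affineSpan_eq_of_collinear_of_nontrivial_inter (hcol x h.1) (hcol y h.2.1)
      ((Set.nontrivial_pair hxy).mono h.pair_subset_inter)

theorem affineSpan_inter_closedBall_eq_of_reflTransGen (h : ReflTransGen (ChainStep X t) x y)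
    (hcol : ∀ z ∈ X, Collinear k (X ∩ closedBall z t)) :
    affineSpan k (X ∩ closedBall x t) = affineSpan k (X ∩ closedBall y t) := by
  induction h with
  | refl => rfl
  | tail _ hstep ih => exact ih.trans (hstep.affineSpan_inter_closedBall_eq hcol)

theorem collinear_of_clusters_collinear_general (ht : 0 ≤ t)
    (hchain : ∀ x ∈ X, ∀ y ∈ X, ReflTransGen (ChainStep X t) x y)
    (hcol : ∀ x ∈ X, Collinear k (X ∩ closedBall x t)) :
    Collinear k X := by
  obtain rfl | ⟨x, hx⟩ := X.eq_empty_or_nonempty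
  · exact collinear_empty k P
  · refine (collinear_coe_affineSpan (hcol x hx)).subset fun y hy ↦ ?_
    rw [affineSpan_inter_closedBall_eq_of_reflTransGen (hchain x hx y hy) hcol]
    exact mem_affineSpan k ⟨hy, mem_closedBall_self ht⟩

end Chain

theorem TChain.reflTransGen_chainStep {d : ℕ} {X : Set (EuclideanSpace ℝ (Fin d))} {t : ℝ}
    {x y : EuclideanSpace ℝ (Fin d)} (h : TChain X t x y) : ReflTransGen (ChainStep X t) x y := by
  obtain ⟨m, c, rfl, rfl, hX, hdist⟩ := h
  refine ReflTransGen.lift c (fun _ _ hij ↦ hij) _ _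
    (reflTransGen_of_succ_of_le (fun i j ↦ ChainStep X t (c i) (c j)) (fun i hi ↦ ?_) m.zero_le)
  exact ⟨hX i hi.2.le, hX (i + 1) hi.2, hdist i hi.2⟩

/-- If `X` has at least two points, any two points of `X` are joined
by a `t`-chain in `X`, and every `t`-cluster of `X` is contained in a line, then
all of `X` lies on a single line. -/
theorem collinear_of_clusters_collinear {d : ℕ}
    (X : Set (EuclideanSpace ℝ (Fin d))) (t : ℝ) (ht : 0 < t)
    (hnt : X.Nontrivial)
    (hchain : ∀ x ∈ X, ∀ x' ∈ X, TChain X t x x')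
    (hcol : ∀ x ∈ X, Collinear ℝ (cluster X x t)) :
    Collinear ℝ X :=
  collinear_of_clusters_collinear_general ht.le
    (fun x hx y hy ↦ (hchain x hx y hy).reflTransGen_chainStep) hcol
end

section
/- Let X ⊆ ℝ^d be uniformly discrete, x ∈ X, and ρ > 0. The symmetry group S_x(ρ) of the cluster C_x(ρ) is finite if and only if dim aff C_x(ρ) ≥ d − 1, i.e., if and only if aff C_x(ρ) = ℝ^d or aff C_x(ρ) is a hyperplane (a (d−1)-dimensional affine subspace). -/
open Metric

/-!
Mazur–Ulam turns the isometries fixing `x` into linear isometries of the translation space, and the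
cluster into a finite set `C` of vectors. A linear isometry preserving `C` also preserves the norm
and `(span C)ᗮ`. If `(span C)ᗮ` is spanned by one vector `v`, it therefore sends `v` to `±v` and is
determined by its action on the finite spanning set `C ∪ {v, -v}`: finitely many choices. Otherwise
`(span C)ᗮ` contains infinitely many lines, as a vector space over an infinite field is not a finite
union of proper subspaces, and the reflections in the hyperplanes orthogonal to these lines all fix
`C` pointwise.
-/

open Module Submodule Set

section Preliminaries

theorem finite_inter_of_subsingleton_inter_ball {α : Type*} [PseudoMetricSpace α] {X K : Set α}
    {r : ℝ} (hr : 0 < r) (hX : ∀ c, (X ∩ ball c r).Subsingleton) (hK : TotallyBounded K) :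
    (X ∩ K).Finite := by
  obtain ⟨t, ht, hKt⟩ := totallyBounded_iff.1 hK r hr
  refine (ht.biUnion fun c _ => (hX c).finite).subset ?_
  rw [← inter_iUnion₂]
  exact inter_subset_inter_right X hKt

theorem finite_setOf_linearMap_mapsTo {R M N : Type*} [Semiring R] [AddCommMonoid M]
    [AddCommMonoid N] [Module R M] [Module R N] {S : Set M} {T : Set N} (hS : S.Finite)
    (hT : T.Finite) (hspan : span R S = ⊤) : {f : M →ₗ[R] N | MapsTo f S T}.Finite := by
  have : Finite S := hS
  have hmaps : MapsTo (fun (f : M →ₗ[R] N) (c : S) => f c) {f | MapsTo f S T}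
      (univ.pi fun _ => T) := fun f hf c _ => hf c.2
  refine Finite.of_injOn hmaps (fun f _ g _ hfg => ?_) (Finite.pi fun _ => hT)
  exact LinearMap.ext_on hspan fun c hc => congrFun hfg ⟨c, hc⟩

theorem isPrincipal_of_finite_image_span_singleton {k V : Type*} [DivisionRing k] [Infinite k]
    [AddCommGroup V] [Module k V] {W : Submodule k V}
    (hW : ((fun v => k ∙ v) '' (W : Set V)).Finite) : W.IsPrincipal := by
  have : Finite ((fun v => k ∙ v) '' (W : Set V)) := hW
  let line (ℓ : (fun v => k ∙ v) '' (W : Set V)) : Submodule k W := ℓ.1.comap W.subtype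
  have hcover : ⋃ ℓ, (line ℓ : Set W) = univ := eq_univ_of_forall fun v =>
    mem_iUnion.2 ⟨⟨k ∙ (v : V), mem_image_of_mem _ v.2⟩, mem_span_singleton_self (v : V)⟩
  obtain ⟨⟨_, v, hv, rfl⟩, htop⟩ := Subspace.exists_eq_top_of_iUnion_eq_univ hcover
  have hle : W ≤ k ∙ v := comap_subtype_eq_top.1 htop
  exact ⟨v, hle.antisymm ((span_singleton_le_iff_mem v W).2 hv)⟩

theorem finite_sphere_inter_of_isPrincipal {V : Type*} [NormedAddCommGroup V] [NormedSpace ℝ V]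
    (W : Submodule ℝ V) [W.IsPrincipal] (r : ℝ) : (sphere 0 r ∩ (W : Set V)).Finite := by
  obtain ⟨v, rfl⟩ := IsPrincipal.principal W
  refine (toFinite {(r / ‖v‖) • v, -(r / ‖v‖) • v}).subset ?_
  rintro w ⟨hw, hwv⟩
  obtain ⟨c, rfl⟩ := mem_span_singleton.1 hwv
  obtain rfl | hv := eq_or_ne v 0
  · simp
  have habs : |c| = r / ‖v‖ := by
    rw [eq_div_iff (norm_ne_zero_iff.2 hv), ← Real.norm_eq_abs, ← norm_smul]
    exact mem_sphere_zero_iff_norm.1 hw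
  rcases eq_or_eq_neg_of_abs_eq habs with rfl | rfl
  · exact mem_insert _ _
  · exact mem_insert_of_mem _ rfl

theorem direction_affineSpan_eq_span_vsub {k V P : Type*} [Ring k] [AddCommGroup V] [Module k V]
    [AddTorsor V P] {C : Set P} {x : P} (hx : x ∈ affineSpan k C) :
    (affineSpan k C).direction = span k ((· -ᵥ x) '' C) := by
  rw [← affineSpan_insert_eq_affineSpan k hx, direction_affineSpan,
    vectorSpan_eq_span_vsub_set_right k (mem_insert x C), image_insert_eq, vsub_self,
    span_insert_zero]

theorem ker_reflection_orthogonal_add_id {𝕜 E : Type*} [RCLike 𝕜] [NormedAddCommGroup E]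
    [InnerProductSpace 𝕜 E] (K : Submodule 𝕜 E) [K.HasOrthogonalProjection] :
    LinearMap.ker ((Kᗮ.reflection.toLinearEquiv : E →ₗ[𝕜] E) + LinearMap.id) = K := by
  ext w
  simp [reflection_orthogonal_apply, neg_add_eq_zero, reflection_eq_self_iff]

end Preliminaries

section IsometriesFixingPoint

variable {V P : Type*} [NormedAddCommGroup V] [NormedSpace ℝ V] [MetricSpace P]
  [NormedAddTorsor V P]

/-- The linear symmetry group of a set `C` of vectors: the linear isometries mapping `C` onto
itself. It is encoded, like `symmGroup`, as a set of isometries. -/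
def linearSymmetries (C : Set V) : Set (V ≃ₗᵢ[ℝ] V) :=
  {L | L '' C = C}

/-- The isometry of the affine space `P` that acts as the linear isometry `L` after `x` has been
chosen as the origin. -/
def isometryAbout (x : P) (L : V ≃ₗᵢ[ℝ] V) : P ≃ᵢ P :=
  ((IsometryEquiv.vaddConst x).symm.trans L.toIsometryEquiv).trans (IsometryEquiv.vaddConst x)

theorem isometryAbout_apply (x : P) (L : V ≃ₗᵢ[ℝ] V) (p : P) :
    isometryAbout x L p = L (p -ᵥ x) +ᵥ x :=
  rfl

theorem isometryAbout_injective (x : P) :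
    Function.Injective (isometryAbout x : (V ≃ₗᵢ[ℝ] V) → P ≃ᵢ P) := by
  intro L M hLM
  ext v
  simpa [isometryAbout_apply] using DFunLike.congr_fun hLM (v +ᵥ x)

theorem exists_isometryAbout_eq {x : P} {s : P ≃ᵢ P} (hs : s x = x) :
    ∃ L : V ≃ₗᵢ[ℝ] V, isometryAbout x L = s := by
  let e : V ≃ᵢ P := IsometryEquiv.vaddConst x
  have h0 : (e.trans (s.trans e.symm)) 0 = 0 := by simp [e, hs]
  refine ⟨(e.trans (s.trans e.symm)).toRealLinearIsometryEquivOfMapZero h0, ?_⟩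
  ext p
  simp [isometryAbout_apply, e]

theorem isometryAbout_image_eq_self_iff {x : P} {L : V ≃ₗᵢ[ℝ] V} {C : Set P} :
    isometryAbout x L '' C = C ↔ L ∈ linearSymmetries ((· -ᵥ x) '' C) := by
  rw [← (vsub_left_injective x).image_injective.eq_iff, linearSymmetries, mem_ofPred_eq]
  simp only [image_image, isometryAbout_apply, vadd_vsub]

theorem isometryAbout_image_linearSymmetries (x : P) (C : Set P) :
    isometryAbout x '' linearSymmetries ((· -ᵥ x) '' C) = {s : P ≃ᵢ P | s x = x ∧ s '' C = C} := by
  ext s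
  constructor
  · rintro ⟨L, hL, rfl⟩
    exact ⟨by simp [isometryAbout_apply], isometryAbout_image_eq_self_iff.2 hL⟩
  · rintro ⟨hx, hC⟩
    obtain ⟨L, rfl⟩ := exists_isometryAbout_eq hx
    exact ⟨L, isometryAbout_image_eq_self_iff.1 hC, rfl⟩

end IsometriesFixingPoint

section InnerProductSpace

variable {V : Type*} [NormedAddCommGroup V] [InnerProductSpace ℝ V]

theorem apply_mem_orthogonal_span {C : Set V} {L : V ≃ₗᵢ[ℝ] V} (hL : L ∈ linearSymmetries C)
    {v : V} (hv : v ∈ (span ℝ C)ᗮ) : L v ∈ (span ℝ C)ᗮ := by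
  have hspan : (span ℝ C).map (L.toLinearEquiv : V →ₗ[ℝ] V) = span ℝ C := by
    rw [map_span]
    exact congrArg (span ℝ) hL
  rw [← hspan, ← map_orthogonal_equiv]
  exact mem_map_of_mem hv

theorem finite_linearSymmetries_of_isPrincipal {C : Set V} (hC : C.Finite)
    (hprin : (span ℝ C)ᗮ.IsPrincipal) : (linearSymmetries C).Finite := by
  obtain ⟨v, hv⟩ := hprin.principal
  have : FiniteDimensional ℝ (span ℝ C) := FiniteDimensional.span_of_finite ℝ hC
  let S : Set V := C ∪ (sphere 0 ‖v‖ ∩ (span ℝ C)ᗮ)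
  have hS : S.Finite := hC.union (finite_sphere_inter_of_isPrincipal _ _)
  have hspan : span ℝ S = ⊤ := by
    have hvS : v ∈ S := Or.inr ⟨by simp, hv ▸ mem_span_singleton_self v⟩
    rw [eq_top_iff, ← sup_orthogonal_of_hasOrthogonalProjection (K := span ℝ C)]
    refine sup_le (span_mono subset_union_left) ?_
    rw [hv, span_singleton_le_iff_mem]
    exact subset_span hvS
  have hmaps : MapsTo (fun L : V ≃ₗᵢ[ℝ] V => (L.toLinearEquiv : V →ₗ[ℝ] V)) (linearSymmetries C)
      {f | MapsTo f S S} := by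
    rintro L hL w (hw | ⟨hw, hw'⟩)
    · exact Or.inl (hL.subset (mem_image_of_mem L hw))
    · exact Or.inr ⟨by simpa using hw, apply_mem_orthogonal_span hL hw'⟩
  refine Finite.of_injOn hmaps (fun L _ M _ hLM => ?_) (finite_setOf_linearMap_mapsTo hS hS hspan)
  exact LinearIsometryEquiv.ext fun w => LinearMap.congr_fun hLM w

theorem reflection_orthogonal_mem_linearSymmetries {C : Set V} {v : V} (hv : v ∈ (span ℝ C)ᗮ) :
    (ℝ ∙ v)ᗮ.reflection ∈ linearSymmetries C := by
  have hfix : ∀ c ∈ C, (ℝ ∙ v)ᗮ.reflection c = c := fun c hc =>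
    reflection_mem_subspace_eq_self
      (mem_orthogonal_singleton_iff_inner_left.2 (hv c (subset_span hc)))
  exact (image_congr hfix).trans (image_id' C)

theorem isPrincipal_orthogonal_of_finite_linearSymmetries {C : Set V}
    (hC : (linearSymmetries C).Finite) : (span ℝ C)ᗮ.IsPrincipal := by
  let negEigenspace (L : V ≃ₗᵢ[ℝ] V) : Submodule ℝ V :=
    LinearMap.ker ((L.toLinearEquiv : V →ₗ[ℝ] V) + LinearMap.id)
  refine isPrincipal_of_finite_image_span_singleton ((hC.image negEigenspace).subset ?_)
  rintro _ ⟨v, hv, rfl⟩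
  exact ⟨_, reflection_orthogonal_mem_linearSymmetries hv, ker_reflection_orthogonal_add_id (ℝ ∙ v)⟩

theorem finite_linearSymmetries_iff_isPrincipal {C : Set V} (hC : C.Finite) :
    (linearSymmetries C).Finite ↔ (span ℝ C)ᗮ.IsPrincipal :=
  ⟨isPrincipal_orthogonal_of_finite_linearSymmetries, finite_linearSymmetries_of_isPrincipal hC⟩

theorem finite_linearSymmetries_iff_finrank_span_ge [FiniteDimensional ℝ V] {C : Set V}
    (hC : C.Finite) :
    (linearSymmetries C).Finite ↔ finrank ℝ V - 1 ≤ finrank ℝ (span ℝ C) := by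
  have hsum := (span ℝ C).finrank_add_finrank_orthogonal
  rw [finite_linearSymmetries_iff_isPrincipal hC, ← finrank_le_one_iff_isPrincipal]
  omega

theorem symmGroup_finite_iff_rank_ge_general {P : Type*} [FiniteDimensional ℝ V]
    [MetricSpace P] [NormedAddTorsor V P] {C : Set P} (hC : C.Finite) {x : P}
    (hx : x ∈ affineSpan ℝ C) :
    {s : P ≃ᵢ P | s x = x ∧ s '' C = C}.Finite ↔
      finrank ℝ V - 1 ≤ finrank ℝ (affineSpan ℝ C).direction := by
  rw [← isometryAbout_image_linearSymmetries, finite_image_iff (isometryAbout_injective x).injOn,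
    direction_affineSpan_eq_span_vsub hx]
  exact finite_linearSymmetries_iff_finrank_span_ge (hC.image _)

end InnerProductSpace

section Cluster

variable {d : ℕ} {X : Set (EuclideanSpace ℝ (Fin d))}

theorem UniformlyDiscrete.finite_cluster (hX : UniformlyDiscrete X)
    (x : EuclideanSpace ℝ (Fin d)) (ρ : ℝ) : (cluster X x ρ).Finite := by
  obtain ⟨r, hr, hball⟩ := hX
  exact finite_inter_of_subsingleton_inter_ball hr hball (isCompact_closedBall x ρ).totallyBounded

theorem mem_cluster_self {x : EuclideanSpace ℝ (Fin d)} (hx : x ∈ X) {ρ : ℝ} (hρ : 0 ≤ ρ) :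
    x ∈ cluster X x ρ :=
  ⟨hx, mem_closedBall_self hρ⟩

end Cluster

/-- The symmetry group `S_x(ρ)` of a cluster of a uniformly discrete
set is finite if and only if the rank of the cluster is at least `d - 1`. -/
theorem symmGroup_finite_iff_rank_ge {d : ℕ}
    (X : Set (EuclideanSpace ℝ (Fin d))) (hX : UniformlyDiscrete X)
    (x : EuclideanSpace ℝ (Fin d)) (hx : x ∈ X) (ρ : ℝ) (hρ : 0 < ρ) :
    (symmGroup X x ρ).Finite ↔ d - 1 ≤ clusterRank X x ρ := by
  simpa only [finrank_euclideanSpace_fin] using! symmGroup_finite_iff_rank_ge_general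
    (hX.finite_cluster x ρ) (mem_affineSpan ℝ (mem_cluster_self hx hρ.le))
end

section
/- (t-extension theorem) Let X ⊆ ℝ^d be a t-bonded set, ρ₀ > 0, and let x, x' ∈ X be such that the clusters C_x(ρ₀ + t) and C_{x'}(ρ₀ + t) are equivalent and S_x(ρ₀) = S_x(ρ₀ + t). Then every isometry g of ℝ^d with g(x) = x' and g(C_x(ρ₀)) = C_{x'}(ρ₀) also satisfies g(C_x(ρ₀ + t)) = C_{x'}(ρ₀ + t). -/
open Metric

/-!
Let `h` be an isometry realising the equivalence of the large clusters; since isometries preserve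
balls, `h` also matches the small ones. If `g` matches the small clusters, then `h⁻¹ ∘ g` is a
symmetry of the small cluster at `x`, hence of the large one, so `g = h ∘ (h⁻¹ ∘ g)` matches the
large clusters because both factors do.
-/

theorem image_trans_symm_eq_self_iff {α β : Type*} (g h : α ≃ β) (A : Set α) :
    (g.trans h.symm) '' A = A ↔ g '' A = h '' A := by
  rw [Equiv.coe_trans, Set.image_comp]
  exact (h.eq_image_iff_symm_image_eq A (g '' A)).symm

section

variable {α β : Type*} [PseudoMetricSpace α] [PseudoMetricSpace β]

theorem inter_closedBall_inter_closedBall_of_le (X : Set α) (x : α) {ρ ρ' : ℝ} (hρ : ρ ≤ ρ') :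
    X ∩ closedBall x ρ' ∩ closedBall x ρ = X ∩ closedBall x ρ := by
  rw [Set.inter_assoc, Set.inter_eq_self_of_subset_right (closedBall_subset_closedBall hρ)]

variable {X : Set α} {Y : Set β} {x : α} {y : β} {ρ ρ' : ℝ}

theorem image_inter_closedBall_eq_of_le (hρ : ρ ≤ ρ') {h : α ≃ᵢ β} (hxy : h x = y)
    (hXY : h '' (X ∩ closedBall x ρ') = Y ∩ closedBall y ρ') :
    h '' (X ∩ closedBall x ρ) = Y ∩ closedBall y ρ :=
  calc h '' (X ∩ closedBall x ρ)
      = h '' (X ∩ closedBall x ρ') ∩ h '' closedBall x ρ := by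
        rw [← Set.image_inter h.injective, inter_closedBall_inter_closedBall_of_le X x hρ]
    _ = Y ∩ closedBall y ρ' ∩ closedBall y ρ := by rw [hXY, h.image_closedBall, hxy]
    _ = Y ∩ closedBall y ρ := inter_closedBall_inter_closedBall_of_le Y y hρ

theorem t_extension_general (hρ : ρ ≤ ρ')
    (hequiv : ∃ h : α ≃ᵢ β, h x = y ∧ h '' (X ∩ closedBall x ρ') = Y ∩ closedBall y ρ')
    (hsymm : ∀ s : α ≃ᵢ α, s x = x → s '' (X ∩ closedBall x ρ) = X ∩ closedBall x ρ →
      s '' (X ∩ closedBall x ρ') = X ∩ closedBall x ρ')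
    {g : α ≃ᵢ β} (hgx : g x = y) (hg : g '' (X ∩ closedBall x ρ) = Y ∩ closedBall y ρ) :
    g '' (X ∩ closedBall x ρ') = Y ∩ closedBall y ρ' := by
  obtain ⟨h, hhx, hh⟩ := hequiv
  have small_eq : g '' (X ∩ closedBall x ρ) = h '' (X ∩ closedBall x ρ) :=
    hg.trans (image_inter_closedBall_eq_of_le hρ hhx hh).symm
  have fix : (g.trans h.symm) x = x := h.symm_apply_eq.2 (hgx.trans hhx.symm)
  have large_symm : (g.trans h.symm) '' (X ∩ closedBall x ρ') = X ∩ closedBall x ρ' :=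
    hsymm _ fix ((image_trans_symm_eq_self_iff g.toEquiv h.toEquiv _).2 small_eq)
  exact ((image_trans_symm_eq_self_iff g.toEquiv h.toEquiv _).1 large_symm).trans hh

end

/-- t-extension theorem: If `C_x(ρ₀ + t)` and `C_{x'}(ρ₀ + t)` are
equivalent and `S_x(ρ₀) = S_x(ρ₀ + t)`, then every isometry sending `x` to `x'` and
`C_x(ρ₀)` onto `C_{x'}(ρ₀)` also sends `C_x(ρ₀ + t)` onto `C_{x'}(ρ₀ + t)`. -/
theorem t_extension {d : ℕ}
    (X : Set (EuclideanSpace ℝ (Fin d))) (t : ℝ) (ht : 0 < t) (hX : TBonded X t)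
    (ρ₀ : ℝ) (hρ₀ : 0 < ρ₀) (x x' : EuclideanSpace ℝ (Fin d))
    (hx : x ∈ X) (hx' : x' ∈ X)
    (hequiv : ClusterEquiv X (ρ₀ + t) x x')
    (hS : symmGroup X x ρ₀ = symmGroup X x (ρ₀ + t)) :
    ∀ g : EuclideanSpace ℝ (Fin d) ≃ᵢ EuclideanSpace ℝ (Fin d),
      g x = x' → g '' cluster X x ρ₀ = cluster X x' ρ₀ →
      g '' cluster X x (ρ₀ + t) = cluster X x' (ρ₀ + t) := by
  intro g hgx hg
  have symm_extends (s : EuclideanSpace ℝ (Fin d) ≃ᵢ EuclideanSpace ℝ (Fin d)) (hsx : s x = x)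
      (hs : s '' cluster X x ρ₀ = cluster X x ρ₀) :
      s '' cluster X x (ρ₀ + t) = cluster X x (ρ₀ + t) :=
    (hS.subset ⟨hsx, hs⟩).2
  exact t_extension_general (le_add_of_nonneg_right ht.le) hequiv symm_extends hgx hg
end

section
/- Let X ⊆ ℝ^d be a t-bonded set and ρ₀ > 0 such that: (1) any two points of X whose ρ₀-clusters are equivalent also have equivalent (ρ₀ + t)-clusters; (2) S_x(ρ₀) = S_x(ρ₀ + t) for every x ∈ X. Then every isometry g of ℝ^d for which there exist x, x' ∈ X with g(x) = x' and g(C_x(ρ₀ + t)) = C_{x'}(ρ₀ + t) maps X onto X, i.e., g ∈ Sym(X). -/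
open Metric

/-! Let `g` carry the `(ρ + t)`-cluster at `x` to the one at `g x`, and let `y ∈ X` be within `t`
of `x`. Then `g` carries the `ρ`-cluster at `y` to the one at `g y`, so by the first condition some
isometry `h` carries the `(ρ + t)`-cluster at `y` to the one at `g y`. Now `h⁻¹ ∘ g` is a symmetry
of the `ρ`-cluster at `y`, hence by the second condition of the `(ρ + t)`-cluster, and so
`g = h ∘ (h⁻¹ ∘ g)` again carries a `(ρ + t)`-cluster to a `(ρ + t)`-cluster. Following chains, `g`
maps `X` into `X`, and so does its inverse. -/

section PseudoMetricSpace

variable {M : Type*} [PseudoMetricSpace M] {X : Set M} {ρ σ t : ℝ} {g h : M ≃ᵢ M}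
  {x x' x'' y : M}

/-- The isometry `g` carries the cluster of radius `ρ` of `X` centered at `x` onto the one centered
at `x'`, center to center. In `ℝ^d`, equivalence of clusters is the existence of such a `g`, and
`symmGroup X x ρ` consists of those `g` for which `x' = x`. -/
def MapsCluster (X : Set M) (ρ : ℝ) (g : M ≃ᵢ M) (x x' : M) : Prop :=
  g x = x' ∧ g '' (X ∩ closedBall x ρ) = X ∩ closedBall x' ρ

namespace MapsCluster

theorem symm (hg : MapsCluster X ρ g x x') : MapsCluster X ρ g.symm x' x := by
  obtain ⟨hx, himage⟩ := hg
  exact ⟨g.symm_apply_eq.2 hx.symm, by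
    rw [← himage, g.image_symm, Set.preimage_image_eq _ g.injective]⟩

theorem trans (hg : MapsCluster X ρ g x x') (hh : MapsCluster X ρ h x' x'') :
    MapsCluster X ρ (g.trans h) x x'' :=
  ⟨(congrArg h hg.1).trans hh.1, by
    rw [← hh.2, ← hg.2, Set.image_image]
    rfl⟩

theorem apply_mem (hg : MapsCluster X ρ g x x') (hy : y ∈ X) (hyx : dist y x ≤ ρ) : g y ∈ X :=
  (hg.2.subset (Set.mem_image_of_mem g ⟨hy, hyx⟩)).1

theorem recenter (hg : MapsCluster X ρ g x x') (hσ : σ + dist y x ≤ ρ) :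
    MapsCluster X σ g y (g y) := by
  have hball : closedBall y σ ⊆ closedBall x ρ := closedBall_subset_closedBall' hσ
  have hball' : closedBall (g y) σ ⊆ closedBall x' ρ :=
    closedBall_subset_closedBall' (by rwa [← hg.1, g.dist_eq])
  refine ⟨rfl, ?_⟩
  calc g '' (X ∩ closedBall y σ)
      = g '' (X ∩ closedBall x ρ ∩ closedBall y σ) := by
        rw [Set.inter_assoc, Set.inter_eq_right.2 hball]
    _ = X ∩ closedBall x' ρ ∩ closedBall (g y) σ := by
        rw [Set.image_inter g.injective, hg.2, g.image_closedBall]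
    _ = X ∩ closedBall (g y) σ := by
        rw [Set.inter_assoc, Set.inter_eq_right.2 hball']

theorem mono (hg : MapsCluster X ρ g x x') (hσ : σ ≤ ρ) : MapsCluster X σ g x x' :=
  hg.1 ▸ hg.recenter (by rwa [dist_self, add_zero])

theorem of_le_of_forall_symmetry (hg : MapsCluster X ρ g x x') (hρσ : ρ ≤ σ)
    (hsymm : ∀ s, MapsCluster X ρ s x x → MapsCluster X σ s x x)
    (hh : MapsCluster X σ h x x') : MapsCluster X σ g x x' := by
  have hs : MapsCluster X σ (g.trans h.symm) x x := hsymm _ (hg.trans (hh.mono hρσ).symm)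
  have hfactor : (g.trans h.symm).trans h = g := IsometryEquiv.ext fun z ↦ h.apply_symm_apply (g z)
  exact hfactor ▸ hs.trans hh

theorem of_reflTransGen {x y : X} {x' : M} (hρ : 0 ≤ ρ)
    (hextend : ∀ x ∈ X, ∀ x' ∈ X, ∀ g, MapsCluster X ρ g x x' → MapsCluster X (ρ + t) g x x')
    (hxy : Relation.ReflTransGen (fun a b : X ↦ dist a b ≤ t) x y)
    (hg : MapsCluster X (ρ + t) g x x') : MapsCluster X (ρ + t) g y (g y) := by
  induction hxy with
  | refl => exact ⟨rfl, hg.1 ▸ hg.2⟩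
  | @tail a b _ hab ih =>
    have hba : dist (b : M) a ≤ t := by rwa [dist_comm]
    have hgb : g b ∈ X := ih.apply_mem b.2 (by linarith)
    exact hextend b b.2 (g b) hgb g (ih.recenter (by linarith))

theorem mapsTo_of_reflTransGen (hρ : 0 ≤ ρ) (ht : 0 ≤ t)
    (hextend : ∀ x ∈ X, ∀ x' ∈ X, ∀ g, MapsCluster X ρ g x x' → MapsCluster X (ρ + t) g x x')
    (hchain : ∀ x y : X, Relation.ReflTransGen (fun a b : X ↦ dist a b ≤ t) x y)
    (hx : x ∈ X) (hg : MapsCluster X (ρ + t) g x x') : Set.MapsTo g X X := fun y hy ↦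
  (hg.of_reflTransGen hρ hextend (hchain ⟨x, hx⟩ ⟨y, hy⟩)).apply_mem hy
    (by rw [dist_self]; positivity)

end MapsCluster

theorem isometry_mem_symX_general (hρ : 0 ≤ ρ) (ht : 0 ≤ t)
    (hchain : ∀ x y : X, Relation.ReflTransGen (fun a b : X ↦ dist a b ≤ t) x y)
    (hequiv : ∀ x ∈ X, ∀ x' ∈ X,
      (∃ h, MapsCluster X ρ h x x') → ∃ h, MapsCluster X (ρ + t) h x x')
    (hsymm : ∀ x ∈ X, ∀ s, MapsCluster X ρ s x x → MapsCluster X (ρ + t) s x x)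
    (hx : x ∈ X) (hx' : x' ∈ X) (hg : MapsCluster X (ρ + t) g x x') : g '' X = X := by
  have hextend : ∀ y ∈ X, ∀ y' ∈ X, ∀ f,
      MapsCluster X ρ f y y' → MapsCluster X (ρ + t) f y y' := by
    intro y hy y' hy' f hf
    obtain ⟨h, hh⟩ := hequiv y hy y' hy' ⟨f, hf⟩
    exact hf.of_le_of_forall_symmetry (le_add_of_nonneg_right ht) (hsymm y hy) hh
  have hmaps : Set.MapsTo g X X := hg.mapsTo_of_reflTransGen hρ ht hextend hchain hx
  have hmaps_symm : Set.MapsTo g.symm X X :=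
    hg.symm.mapsTo_of_reflTransGen hρ ht hextend hchain hx'
  exact hmaps.image_subset.antisymm fun z hz ↦ ⟨g.symm z, hmaps_symm hz, g.apply_symm_apply z⟩

end PseudoMetricSpace

theorem TChain.reflTransGen {d : ℕ} {X : Set (EuclideanSpace ℝ (Fin d))} {t : ℝ} {x x' : X}
    (hxx' : TChain X t x x') : Relation.ReflTransGen (fun a b : X ↦ dist a b ≤ t) x x' := by
  obtain ⟨m, c, hc₀, hcm, hcX, hdist⟩ := hxx'
  have hreach : ∀ i (hi : i ≤ m),
      Relation.ReflTransGen (fun a b : X ↦ dist a b ≤ t) x ⟨c i, hcX i hi⟩ := by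
    intro i
    induction i with
    | zero => exact fun _ ↦ (Subtype.ext hc₀.symm : x = ⟨c 0, _⟩) ▸ .refl
    | succ i ih => exact fun hi ↦ (ih (Nat.le_of_succ_le hi)).tail (hdist i hi)
  simpa only [hcm] using hreach m le_rfl

/-- Under the two local conditions, any isometry mapping some
`(ρ₀ + t)`-cluster of `X` onto another (with center going to center) is a symmetry
of the whole set `X`. -/
theorem isometry_mem_symX {d : ℕ}
    (X : Set (EuclideanSpace ℝ (Fin d))) (t : ℝ) (ht : 0 < t) (hX : TBonded X t)
    (ρ₀ : ℝ) (hρ₀ : 0 < ρ₀)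
    (h1 : ∀ x ∈ X, ∀ x' ∈ X, ClusterEquiv X ρ₀ x x' → ClusterEquiv X (ρ₀ + t) x x')
    (h2 : ∀ x ∈ X, symmGroup X x ρ₀ = symmGroup X x (ρ₀ + t)) :
    ∀ g : EuclideanSpace ℝ (Fin d) ≃ᵢ EuclideanSpace ℝ (Fin d),
      (∃ x ∈ X, ∃ x' ∈ X, g x = x' ∧
        g '' cluster X x (ρ₀ + t) = cluster X x' (ρ₀ + t)) →
      g ∈ SymX X :=
  fun _ ⟨_, hx, _, hx', hg⟩ ↦ isometry_mem_symX_general hρ₀.le ht.le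
    (fun a b ↦ (hX.2.2 a a.2 b b.2).reflTransGen) h1 (fun x hx _ hs ↦ (h2 x hx).subset hs) hx hx' hg
end

section
/- Let X ⊆ ℝ^d be a Delone set with parameters r and R. If the 2R-clusters of X fall into finitely many equivalence classes (N(2R) < ∞), then for every ρ > 0 the ρ-clusters of X fall into finitely many equivalence classes (N(ρ) < ∞); that is, X is a set of finite type. -/
open Metric

/-! Call `x, x' ∈ X` adjacent when their Voronoi cells meet. An extreme point `c` of the
intersection of the two cells can be moved in no direction within it, so the points of `X` nearest
to `c` affinely span the space; they are within `R` of `c`, hence lie in both `2R`-clusters.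

If finitely many `2R`-clusters exist up to isometry, each is contained in a copy `g x '' M` of one
finite set `M`. For adjacent `x, x'`, the transition `(g x)⁻¹ * g x'` sends a spanning subset of `M`
into `M`, so only finitely many transitions `T` occur between adjacent points. Following the segment
from `x` to `y` out of the cell of `x` leads to an adjacent point strictly closer to `y`; hence if
`y` is in the `ρ`-cluster of `x`, a bounded number of such steps leads from `x` to `y`, and
`(g x)⁻¹ * g y ∈ T ^ n`. All `ρ`-clusters are then contained in copies of the finite set obtained by
applying `T ^ n` to `M`. -/

open Filter Set
open scoped NNReal Pointwise Topology

theorem exists_encard_inter_closedBall_le_of_isSeparated {E : Type*} [SeminormedAddCommGroup E]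
    [ProperSpace E] {X : Set E} {ε : ℝ≥0} (hε : ε ≠ 0) (hX : IsSeparated ε X) (ρ : ℝ) :
    ∃ n : ℕ, ∀ y, (X ∩ closedBall y ρ).encard ≤ n := by
  obtain ⟨N, -, hN, hcover⟩ := exists_finite_isCover_of_isCompact
    (div_ne_zero hε two_ne_zero) (isCompact_closedBall (0 : E) ρ)
  refine ⟨N.ncard, fun y ↦ ?_⟩
  have hcover_y : IsCover (ε / 2) (closedBall y ρ) ((y + ·) '' N) := by
    have himage : (y + ·) '' closedBall 0 ρ = closedBall y ρ := by simp
    rw [← himage]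
    exact (Isometry.isCover_image_iff (isometry_add_left y) N).2 hcover
  calc (X ∩ closedBall y ρ).encard
      ≤ packingNumber ε (closedBall y ρ) :=
        (hX.subset inter_subset_left).encard_le_packingNumber inter_subset_right
    _ = packingNumber (2 * (ε / 2)) (closedBall y ρ) := by rw [mul_div_cancel₀ _ two_ne_zero]
    _ ≤ externalCoveringNumber (ε / 2) (closedBall y ρ) :=
        packingNumber_two_mul_le_externalCoveringNumber _ _
    _ ≤ ((y + ·) '' N).encard := hcover_y.externalCoveringNumber_le_encard
    _ ≤ N.encard := encard_image_le _ _
    _ = N.ncard := hN.cast_ncard_eq.symm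

section VoronoiMetric

variable {α : Type*} [PseudoMetricSpace α] {X : Set α} {x : α}

/-- The Voronoi cell of `x` with respect to `X`: the points to which no point of `X` is closer than
`x`. The centre `x` is not required to belong to `X`. -/
def voronoiCell (X : Set α) (x : α) : Set α := {c | ∀ z ∈ X, dist c x ≤ dist c z}

theorem self_mem_voronoiCell : x ∈ voronoiCell X x := fun z _ ↦ by simp

theorem isClosed_voronoiCell : IsClosed (voronoiCell X x) := by
  simp only [voronoiCell, ofPred_forall]
  exact isClosed_biInter fun z _ ↦ isClosed_le (by fun_prop) (by fun_prop)

theorem voronoiCell_subset_closedBall {R : ℝ} (hR : ∀ c, (X ∩ closedBall c R).Nonempty) :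
    voronoiCell X x ⊆ closedBall x R := by
  intro c hc
  obtain ⟨z, hzX, hz⟩ := hR c
  exact (hc z hzX).trans (mem_closedBall'.1 hz)

end VoronoiMetric

section VoronoiInner

variable {E : Type*} [NormedAddCommGroup E] [InnerProductSpace ℝ E] {X : Set E} {c x x' u : E}

theorem dist_add_sq_sub_dist_add_sq (c u x z : E) :
    dist (c + u) z ^ 2 - dist (c + u) x ^ 2 =
      dist c z ^ 2 - dist c x ^ 2 - 2 * inner ℝ (z - x) u := by
  have expand (w : E) :
      dist (c + u) w ^ 2 = dist c w ^ 2 + 2 * inner ℝ (c - w) u + ‖u‖ ^ 2 := by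
    rw [dist_eq_norm, dist_eq_norm, add_sub_right_comm, norm_add_sq_real]
  rw [expand, expand, inner_sub_left, inner_sub_left, inner_sub_left]
  ring

theorem eventually_add_smul_mem_voronoiCell (hfin : ∀ y ρ, (X ∩ closedBall y ρ).Finite)
    (hc : c ∈ voronoiCell X x) (hu : ∀ z ∈ X, dist c z = dist c x → inner ℝ (z - x) u ≤ 0) :
    ∀ᶠ ε in 𝓝[≥] (0 : ℝ), c + ε • u ∈ voronoiCell X x := by
  have near : ∀ᶠ ε in 𝓝[≥] (0 : ℝ), ∀ z ∈ X ∩ closedBall c (dist c x + 2),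
      dist (c + ε • u) x ≤ dist (c + ε • u) z := by
    refine (eventually_all_finite (hfin _ _)).2 fun z ⟨hzX, _⟩ ↦ ?_
    rcases (hc z hzX).eq_or_lt with heq | hlt
    · filter_upwards [self_mem_nhdsWithin] with ε (hε : 0 ≤ ε)
      have hinner := mul_nonpos_of_nonneg_of_nonpos hε (hu z hzX heq.symm)
      have hsq := dist_add_sq_sub_dist_add_sq c (ε • u) x z
      rw [heq, inner_smul_right] at hsq
      exact le_of_sq_le_sq (by linarith) dist_nonneg
    · have hx : Tendsto (fun ε : ℝ ↦ dist (c + ε • u) x) (𝓝 0) (𝓝 (dist c x)) :=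
        Continuous.tendsto' (by fun_prop) _ _ (by simp)
      have hz : Tendsto (fun ε : ℝ ↦ dist (c + ε • u) z) (𝓝 0) (𝓝 (dist c z)) :=
        Continuous.tendsto' (by fun_prop) _ _ (by simp)
      exact ((hx.eventually_lt hz hlt).mono fun _ ↦ le_of_lt).filter_mono nhdsWithin_le_nhds
  have small : ∀ᶠ ε in 𝓝[≥] (0 : ℝ), dist (c + ε • u) c < 1 := by
    have hdist : Tendsto (fun ε : ℝ ↦ dist (c + ε • u) c) (𝓝 0) (𝓝 0) :=
      Continuous.tendsto' (by fun_prop) _ _ (by simp)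
    exact (hdist.eventually_lt_const one_pos).filter_mono nhdsWithin_le_nhds
  filter_upwards [near, small] with ε hnear hsmall z hzX
  rcases le_or_gt (dist z c) (dist c x + 2) with hz | hz
  · exact hnear z ⟨hzX, hz⟩
  · linarith [dist_triangle (c + ε • u) c x, dist_triangle_left z c (c + ε • u)]

/-- The point `c` where the segment from `x` to `y` leaves the cell of `x` is also in the cell of
some `z` on the `y`-side of the bisector of `x` and `z`. -/
theorem exists_voronoiCell_inter_nonempty_dist_lt (hfin : ∀ y ρ, (X ∩ closedBall y ρ).Finite)
    {y : E} (hy : y ∈ X) (hxy : x ≠ y) :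
    ∃ z ∈ X, (voronoiCell X x ∩ voronoiCell X z).Nonempty ∧ dist z y < dist x y := by
  let path : ℝ → E := fun t ↦ x + t • (y - x)
  have hcompact : IsCompact (Icc 0 1 ∩ path ⁻¹' voronoiCell X x) :=
    isCompact_Icc.inter_right (isClosed_voronoiCell.preimage (by fun_prop))
  obtain ⟨t, ⟨⟨ht0, ht1⟩, htx⟩, ht_max⟩ := hcompact.exists_isGreatest
    ⟨0, by simp, by simpa [path] using self_mem_voronoiCell⟩
  have ht_lt : t < 1 := by
    refine ht1.lt_of_ne ?_
    rintro rfl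
    exact hxy (by simpa [path, eq_comm] using htx y hy)
  obtain ⟨z, hzX, hz_dist, hz_inner⟩ :
      ∃ z ∈ X, dist (path t) z = dist (path t) x ∧ 0 < inner ℝ (z - x) (y - x) := by
    by_contra! hstay
    have hstays := (eventually_add_smul_mem_voronoiCell hfin htx hstay).filter_mono
      (nhdsWithin_mono 0 Ioi_subset_Ici_self)
    obtain ⟨ε, hεx, hε0, hε1⟩ :=
      (hstays.and (Ioo_mem_nhdsGT (sub_pos.2 ht_lt))).exists
    have hpath : path (t + ε) ∈ voronoiCell X x := by
      simpa [path, add_smul, add_assoc] using hεx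
    linarith [ht_max ⟨⟨by linarith, by linarith⟩, hpath⟩]
  have hz : path t ∈ voronoiCell X z := fun w hw ↦ hz_dist.le.trans (htx w hw)
  refine ⟨z, hzX, ⟨path t, htx, hz⟩, lt_of_pow_lt_pow_left₀ 2 dist_nonneg ?_⟩
  have hy_eq : path t + (1 - t) • (y - x) = y := by simp only [path]; module
  have hsq := dist_add_sq_sub_dist_add_sq (path t) ((1 - t) • (y - x)) x z
  rw [hy_eq, hz_dist, inner_smul_right, dist_comm y, dist_comm y] at hsq
  linarith [mul_pos (sub_pos.2 ht_lt) hz_inner]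

theorem inv_mul_mem_pow_of_voronoiCell_inter_nonempty {G : Type*} [Group G] {g : E → G} {T : Set G}
    (hfin : ∀ y ρ, (X ∩ closedBall y ρ).Finite)
    (hT : ∀ x ∈ X, ∀ x' ∈ X, (voronoiCell X x ∩ voronoiCell X x').Nonempty → (g x)⁻¹ * g x' ∈ T)
    {y : E} (hx : x ∈ X) (hy : y ∈ X) {n : ℕ} (hn : (X ∩ closedBall y (dist x y)).ncard ≤ n) :
    (g x)⁻¹ * g y ∈ T ^ n := by
  have one_mem : 1 ∈ T := by
    simpa using hT x hx x hx ⟨x, self_mem_voronoiCell, self_mem_voronoiCell⟩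
  refine pow_subset_pow_right one_mem hn ?_
  clear hn
  induction hk : (X ∩ closedBall y (dist x y)).ncard using Nat.strong_induction_on
    generalizing x with
  | _ k ih =>
    rcases eq_or_ne x y with rfl | hxy
    · simpa using one_mem_pow one_mem
    obtain ⟨z, hzX, hadj, hlt⟩ := exists_voronoiCell_inter_nonempty_dist_lt hfin hy hxy
    have hcard : (X ∩ closedBall y (dist z y)).ncard < k := by
      rw [← hk]
      refine ncard_lt_ncard (ssubset_iff_subset_ne.2 ⟨by gcongr, fun heq ↦ ?_⟩) (hfin _ _)
      have hxz : x ∈ X ∩ closedBall y (dist z y) := heq ▸ ⟨hx, mem_closedBall.2 le_rfl⟩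
      exact hlt.not_ge hxz.2
    have hpow : (g x)⁻¹ * g y ∈ T * T ^ (X ∩ closedBall y (dist z y)).ncard := by
      have hstep := mul_mem_mul (hT x hx z hzX hadj) (ih _ hcard hzX rfl)
      rwa [mul_assoc, mul_inv_cancel_left] at hstep
    rw [← pow_succ'] at hpow
    exact pow_subset_pow_right one_mem hcard hpow

variable [FiniteDimensional ℝ E]

theorem affineSpan_nearest_eq_top_of_mem_extremePoints
    (hfin : ∀ y ρ, (X ∩ closedBall y ρ).Finite) (hx : x ∈ X) (hx' : x' ∈ X)
    (hc : c ∈ (voronoiCell X x ∩ voronoiCell X x').extremePoints ℝ) :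
    affineSpan ℝ {z ∈ X | dist c z = dist c x} = ⊤ := by
  obtain ⟨⟨hcx, hcx'⟩, hextreme⟩ := hc
  set S := {z ∈ X | dist c z = dist c x}
  have hdist : dist c x' = dist c x := le_antisymm (hcx' x hx) (hcx x' hx')
  have hxS : x ∈ S := ⟨hx, rfl⟩
  have hx'S : x' ∈ S := ⟨hx', hdist⟩
  rw [← AffineSubspace.direction_eq_top_iff_of_nonempty ⟨x, subset_affineSpan ℝ S hxS⟩,
    direction_affineSpan, ← Submodule.orthogonal_eq_bot_iff, Submodule.eq_bot_iff]
  have hstay (u : E) (hu : u ∈ (vectorSpan ℝ S)ᗮ) :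
      ∀ᶠ ε in 𝓝[≥] (0 : ℝ), c + ε • u ∈ voronoiCell X x ∩ voronoiCell X x' := by
    have horth {z w : E} (hz : z ∈ S) (hw : w ∈ S) : inner ℝ (z - w) u ≤ 0 :=
      (hu _ (vsub_mem_vectorSpan ℝ hz hw)).le
    exact (eventually_add_smul_mem_voronoiCell hfin hcx fun z hzX hz ↦ horth ⟨hzX, hz⟩ hxS).and
      (eventually_add_smul_mem_voronoiCell hfin hcx' fun z hzX hz ↦
        horth ⟨hzX, hz.trans hdist⟩ hx'S)
  intro u hu
  obtain ⟨ε, ⟨hplus, hminus⟩, hε⟩ := (((hstay u hu).and (hstay (-u) (neg_mem hu))).filter_mono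
    (nhdsWithin_mono 0 Ioi_subset_Ici_self)).and self_mem_nhdsWithin |>.exists
  have hmid : c ∈ openSegment ℝ (c + ε • u) (c + ε • -u) :=
    ⟨1 / 2, 1 / 2, by norm_num, by norm_num, by norm_num, by module⟩
  have hεu : ε • u = 0 := by simpa using hextreme hplus hminus hmid
  exact (smul_eq_zero.1 hεu).resolve_left (ne_of_gt hε)

theorem affineSpan_inter_closedBall_two_mul_eq_top {R : ℝ}
    (hfin : ∀ y ρ, (X ∩ closedBall y ρ).Finite) (hR : ∀ c, (X ∩ closedBall c R).Nonempty)
    (hx : x ∈ X) (hx' : x' ∈ X) (hadj : (voronoiCell X x ∩ voronoiCell X x').Nonempty) :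
    affineSpan ℝ ((X ∩ closedBall x (2 * R)) ∩ (X ∩ closedBall x' (2 * R))) = ⊤ := by
  have hcompact : IsCompact (voronoiCell X x ∩ voronoiCell X x') :=
    (isCompact_closedBall x R).of_isClosed_subset (isClosed_voronoiCell.inter isClosed_voronoiCell)
      (inter_subset_left.trans (voronoiCell_subset_closedBall hR))
  obtain ⟨c, hc⟩ := hcompact.extremePoints_nonempty hadj
  have hcx : dist c x ≤ R := voronoiCell_subset_closedBall hR hc.1.1
  have hcx' : dist c x' ≤ R := voronoiCell_subset_closedBall hR hc.1.2
  refine eq_top_mono (affineSpan_mono ℝ ?_)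
    (affineSpan_nearest_eq_top_of_mem_extremePoints hfin hx hx' hc)
  rintro z ⟨hzX, hz⟩
  exact ⟨⟨hzX, by rw [mem_closedBall]; linarith [dist_triangle_left z x c]⟩,
    ⟨hzX, by rw [mem_closedBall]; linarith [dist_triangle_left z x' c]⟩⟩

end VoronoiInner

theorem finite_setOf_affineSpan_inter_preimage_eq_top {k V₁ P₁ V₂ P₂ : Type*} [Ring k]
    [AddCommGroup V₁] [Module k V₁] [AddTorsor V₁ P₁] [AddCommGroup V₂] [Module k V₂]
    [AddTorsor V₂ P₂] {M : Set P₁} {N : Set P₂} (hM : M.Finite) (hN : N.Finite) :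
    {f : P₁ →ᵃ[k] P₂ | affineSpan k (M ∩ f ⁻¹' N) = ⊤}.Finite := by
  refine Finite.of_injOn (f := fun f ↦ {p ∈ M ×ˢ N | f p.1 = p.2}) (t := 𝒫 (M ×ˢ N))
    (fun f _ ↦ sep_subset _ _) ?_ (hM.prod hN).finite_subsets
  intro f hf f' _ hgraph
  refine AffineMap.ext_on hf fun p ⟨hpM, hpN⟩ ↦ ?_
  have hp := (Set.ext_iff.1 hgraph (p, f p)).1 ⟨⟨hpM, hpN⟩, rfl⟩
  exact hp.2.symm

section OverlapIsometries

variable {k V P : Type*} [NormedField k] [SeminormedAddCommGroup V] [NormedSpace k V]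
  [PseudoMetricSpace P] [NormedAddTorsor V P] {M S : Set P}

/-- The affine isometries `τ` such that the points of `M` sent into `M` by `τ` affinely span the
space: the possible transitions between two copies of `M` with a spanning overlap. -/
def overlapIsometries (k : Type*) {V P : Type*} [NormedField k] [SeminormedAddCommGroup V]
    [NormedSpace k V] [PseudoMetricSpace P] [NormedAddTorsor V P] (M : Set P) :
    Set (P ≃ᵃⁱ[k] P) :=
  {τ | affineSpan k (M ∩ τ ⁻¹' M) = ⊤}

theorem finite_overlapIsometries (hM : M.Finite) : (overlapIsometries k M).Finite :=
  (finite_setOf_affineSpan_inter_preimage_eq_top hM hM).of_injOn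
    (f := fun τ ↦ (τ.toAffineEquiv : P →ᵃ[k] P)) (fun _ hτ ↦ hτ)
    (AffineEquiv.toAffineMap_injective.comp AffineIsometryEquiv.toAffineEquiv_injective).injOn

theorem inv_mul_mem_overlapIsometries {e e' : P ≃ᵃⁱ[k] P} (hS : affineSpan k S = ⊤)
    (he : S ⊆ e '' M) (he' : S ⊆ e' '' M) : e⁻¹ * e' ∈ overlapIsometries k M := by
  refine eq_top_mono (affineSpan_mono k ?_) (e'.symm.toAffineEquiv.span_eq_top_iff.1 hS)
  rintro _ ⟨s, hs, rfl⟩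
  obtain ⟨m, hm, rfl⟩ := he hs
  obtain ⟨m', hm', hmm'⟩ := he' hs
  constructor
  · simpa [← hmm'] using hm'
  · simpa using hm

end OverlapIsometries

theorem finite_quot_of_forall_mem {α β : Type*} {r : α → α → Prop} {f : α → β} {s : Set β}
    (hs : s.Finite) (hf : ∀ a, f a ∈ s) (hr : ∀ a b, f a = f b → r a b) : Finite (Quot r) := by
  have := hs.to_subtype
  refine Finite.of_injective (fun q : Quot r ↦ (⟨f q.out, hf _⟩ : s)) fun p q hpq ↦ ?_
  rw [← p.out_eq, ← q.out_eq]
  exact Quot.sound (hr _ _ (congrArg Subtype.val hpq))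

theorem finite_pow {G : Type*} [Monoid G] {s : Set G} (hs : s.Finite) : ∀ n : ℕ, (s ^ n).Finite
  | 0 => by simp
  | n + 1 => by simpa only [pow_succ] using (finite_pow hs n).mul hs

section Cluster

variable {d : ℕ} {X M : Set (EuclideanSpace ℝ (Fin d))} {r R ρ : ℝ}
  {g : EuclideanSpace ℝ (Fin d) → EuclideanSpace ℝ (Fin d) ≃ᵃⁱ[ℝ] EuclideanSpace ℝ (Fin d)}

theorem IsDeloneSet.exists_encard_inter_closedBall_le (hX : IsDeloneSet X r R) (ρ : ℝ) :
    ∃ n : ℕ, ∀ y, (X ∩ closedBall y ρ).encard ≤ n := by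
  obtain ⟨hr, -, hball, -⟩ := hX
  have hsep : IsSeparated (r / 2).toNNReal X := by
    intro a ha b hb hab
    have hdist : r ≤ dist a b := by
      by_contra! hlt
      exact hab (hball b ⟨ha, hlt⟩ ⟨hb, mem_ball_self hr⟩)
    rw [edist_dist]
    exact (ENNReal.ofReal_lt_ofReal_iff (hr.trans_le hdist)).2 (by linarith)
  exact exists_encard_inter_closedBall_le_of_isSeparated (by simpa using hr) hsep ρ

theorem IsDeloneSet.finite_inter_closedBall (hX : IsDeloneSet X r R)
    (y : EuclideanSpace ℝ (Fin d)) (ρ : ℝ) : (X ∩ closedBall y ρ).Finite :=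
  have ⟨_, hn⟩ := hX.exists_encard_inter_closedBall_le ρ
  finite_of_encard_le_coe (hn y)

theorem equivalence_clusterEquiv (X : Set (EuclideanSpace ℝ (Fin d))) (ρ : ℝ) :
    Equivalence fun a b : X ↦ ClusterEquiv X ρ a b where
  refl a := ⟨.refl _, rfl, image_id _⟩
  symm := by
    rintro a b ⟨g, hab, hg⟩
    refine ⟨g.symm, g.symm_apply_eq.2 hab.symm, ?_⟩
    rw [← hg]
    exact g.toEquiv.symm_image_image _
  trans := by
    rintro a b c ⟨g, hab, hg⟩ ⟨g', hbc, hg'⟩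
    refine ⟨g.trans g', by simp [hab, hbc], ?_⟩
    rw [← hg', ← hg]
    exact image_comp g' g _

/-- A finite set `M` such that each `ρ`-cluster `C_x(ρ)` of `X` is contained in the copy `g x '' M`
of `M`; a common target in which to compare all `ρ`-clusters of `X`. The isometries `g x` are
bundled as affine ones, which is no restriction by the Mazur–Ulam theorem. -/
def IsClusterAtlas (X : Set (EuclideanSpace ℝ (Fin d))) (ρ : ℝ)
    (M : Set (EuclideanSpace ℝ (Fin d)))
    (g : EuclideanSpace ℝ (Fin d) → EuclideanSpace ℝ (Fin d) ≃ᵃⁱ[ℝ] EuclideanSpace ℝ (Fin d)) :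
    Prop :=
  M.Finite ∧ ∀ x ∈ X, cluster X x ρ ⊆ g x '' M

theorem exists_isClusterAtlas_of_finite_quot (hfin : ∀ y ρ, (X ∩ closedBall y ρ).Finite)
    (h : Finite (Quot fun a b : X ↦ ClusterEquiv X ρ (a : EuclideanSpace ℝ (Fin d)) b)) :
    ∃ M g, IsClusterAtlas X ρ M g := by
  have hrep : ∀ x ∈ X, ∃ (q : Quot fun a b : X ↦ ClusterEquiv X ρ a b)
      (e : EuclideanSpace ℝ (Fin d) ≃ᵃⁱ[ℝ] EuclideanSpace ℝ (Fin d)),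
      e '' cluster X q.out ρ = cluster X x ρ := by
    intro x hx
    let q := Quot.mk (fun a b : X ↦ ClusterEquiv X ρ a b) ⟨x, hx⟩
    obtain ⟨e, -, he⟩ : ClusterEquiv X ρ q.out x :=
      (equivalence_clusterEquiv X ρ).eqvGen_iff.1 (Quot.eqvGen_exact q.out_eq)
    exact ⟨q, e.toRealAffineIsometryEquiv, he⟩
  choose! q g hg using hrep
  refine ⟨⋃ q : Quot fun a b : X ↦ ClusterEquiv X ρ a b, cluster X q.out ρ, g,
    finite_iUnion fun _ ↦ hfin _ _, fun x hx ↦ ?_⟩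
  rw [← hg x hx]
  exact image_mono (subset_iUnion_of_subset _ subset_rfl)

namespace IsClusterAtlas

theorem finite_quot_clusterEquiv (h : IsClusterAtlas X ρ M g) (hρ : 0 ≤ ρ) :
    Finite (Quot fun a b : X ↦ ClusterEquiv X ρ (a : EuclideanSpace ℝ (Fin d)) b) := by
  have hsub (x : X) : (g x).symm '' cluster X x ρ ⊆ M := by
    rintro _ ⟨y, hy, rfl⟩
    obtain ⟨m, hm, rfl⟩ := h.2 x x.2 hy
    simpa using hm
  refine finite_quot_of_forall_mem
    (f := fun x : X ↦ ((g x).symm x, (g x).symm '' cluster X x ρ)) (h.1.prod h.1.finite_subsets)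
    (fun x ↦ ⟨hsub x (mem_image_of_mem _ ⟨x.2, mem_closedBall_self hρ⟩), hsub x⟩) ?_
  intro a b hab
  obtain ⟨hcentre, hcluster⟩ := Prod.mk.inj hab
  refine ⟨((g a).symm.trans (g b)).toIsometryEquiv, ?_, ?_⟩
  · simp [hcentre]
  · have himage : g b '' ((g a).symm '' cluster X a ρ) = cluster X b ρ := by
      rw [hcluster]
      exact (g b).toEquiv.image_symm_image _
    rw [← himage]
    exact image_comp (g b) (g a).symm _

theorem exists_of_isDeloneSet (h : IsClusterAtlas X (2 * R) M g) (hX : IsDeloneSet X r R)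
    (ρ : ℝ) : ∃ W, IsClusterAtlas X ρ W g := by
  obtain ⟨n, hn⟩ := hX.exists_encard_inter_closedBall_le ρ
  have htransition (x) (hx : x ∈ X) (x') (hx' : x' ∈ X)
      (hadj : (voronoiCell X x ∩ voronoiCell X x').Nonempty) :
      (g x)⁻¹ * g x' ∈ overlapIsometries ℝ M :=
    inv_mul_mem_overlapIsometries
      (affineSpan_inter_closedBall_two_mul_eq_top hX.finite_inter_closedBall hX.2.2.2 hx hx' hadj)
      (inter_subset_left.trans (h.2 x hx)) (inter_subset_right.trans (h.2 x' hx'))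
  refine ⟨⋃ τ ∈ overlapIsometries ℝ M ^ n, τ '' M,
    (finite_pow (finite_overlapIsometries h.1) n).biUnion fun τ _ ↦ h.1.image τ, ?_⟩
  rintro x hx y ⟨hyX, hy⟩
  have hcard : (X ∩ closedBall y (dist x y)).ncard ≤ n := by
    have hencard : (X ∩ closedBall y (dist x y)).encard ≤ n :=
      (encard_le_encard (by gcongr; exact mem_closedBall'.1 hy)).trans (hn y)
    exact (encard_le_coe_iff_finite_ncard_le.1 hencard).2
  have hτ : (g x)⁻¹ * g y ∈ overlapIsometries ℝ M ^ n :=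
    inv_mul_mem_pow_of_voronoiCell_inter_nonempty hX.finite_inter_closedBall htransition
      hx hyX hcard
  obtain ⟨m, hm, hmy⟩ := h.2 y hyX ⟨hyX, mem_closedBall_self (by linarith [hX.2.1])⟩
  refine ⟨((g x)⁻¹ * g y) m, mem_biUnion hτ (mem_image_of_mem _ hm), ?_⟩
  simp [hmy]

end IsClusterAtlas

end Cluster

/-- A Delone set with finitely many equivalence classes of
`2R`-clusters has finitely many equivalence classes of `ρ`-clusters for every
`ρ > 0`, i.e. it is of finite type. -/
theorem delone_finite_type {d : ℕ} (X : Set (EuclideanSpace ℝ (Fin d))) (r R : ℝ)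
    (hX : IsDeloneSet X r R)
    (h : Finite (Quot fun a b : X =>
      ClusterEquiv X (2 * R) (a : EuclideanSpace ℝ (Fin d)) b)) :
    ∀ ρ > 0, Finite (Quot fun a b : X =>
      ClusterEquiv X ρ (a : EuclideanSpace ℝ (Fin d)) b) := by
  intro ρ hρ
  obtain ⟨M, g, hMg⟩ := exists_isClusterAtlas_of_finite_quot hX.finite_inter_closedBall h
  obtain ⟨W, hWg⟩ := hMg.exists_of_isDeloneSet hX ρ
  exact hWg.finite_quot_clusterEquiv hρ.le
end

section
/- For every t > 0 and every M > 0 there exist a number k > M and a t-bonded set X ⊆ ℝ² such that the kt-clusters of X fall into finitely many equivalence classes (N(kt) < ∞), but for every ε > 0 the (kt + ε)-clusters of X fall into infinitely many equivalence classes (N(kt + ε) = ∞). In particular, such an X is a t-bonded set that is not of finite type. -/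
open Metric

/-!
Take two parallel horizontal rows at distance `k * t`, the lower one with spacing `t`, the upper
one with spacing `α * t` for an irrational `α`, and join them by a vertical column of spacing `t`.
Since `α` is irrational, no point off the column lies exactly above or below another one, so a
`k * t`-cluster centered far from the column is an interval of a single row. A slightly larger
cluster centered at the point `n` of the lower row sees the point `m` of the upper row as soon as
`δ = |α * m - n|` is small enough. The squared distance `δ ^ 2 + k ^ 2` (in units of `t ^ 2`) is not
an integer, hence remembers that the seen point is in the upper row, and by irrationality `δ`
determines `n` up to sign.
-/

section General

variable {d : ℕ} {X : Set (EuclideanSpace ℝ (Fin d))} {t ρ : ℝ} {x y z : EuclideanSpace ℝ (Fin d)}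

lemma UniformlyDiscrete.of_pairwise_le_dist {δ : ℝ} (hδ : 0 < δ)
    (h : X.Pairwise fun x y => δ ≤ dist x y) : UniformlyDiscrete X := by
  refine ⟨δ / 2, half_pos hδ, fun c x hx y hy => ?_⟩
  by_contra hxy
  have hxc : dist x c < δ / 2 := hx.2
  have hyc : dist y c < δ / 2 := hy.2
  linarith [h hx.1 hy.1 hxy, dist_triangle_right x y c]

lemma TChain.symm (h : TChain X t x y) : TChain X t y x := by
  obtain ⟨m, c, hc₀, hcm, hcX, hct⟩ := h
  refine ⟨m, fun i => c (m - i), by simpa using hcm, by simpa using hc₀,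
    fun i _ => hcX _ (Nat.sub_le m i), fun i hi => ?_⟩
  have hstep : m - i = m - (i + 1) + 1 := by omega
  simpa only [dist_comm, hstep] using hct (m - (i + 1)) (by omega)

lemma TChain.trans (hxy : TChain X t x y) (hyz : TChain X t y z) : TChain X t x z := by
  obtain ⟨m, c, hc₀, hcm, hcX, hct⟩ := hxy
  obtain ⟨m', c', hc'₀, hc'm, hc'X, hc't⟩ := hyz
  refine ⟨m + m', fun i => if i ≤ m then c i else c' (i - m), by simpa using hc₀, ?_,
    fun i hi => ?_, fun i hi => ?_⟩
  · rcases Nat.eq_zero_or_pos m' with rfl | hm'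
    · simp [hcm, ← hc'm, hc'₀]
    · simpa [hm'.ne'] using hc'm
  · dsimp only
    split_ifs with him
    · exact hcX i him
    · exact hc'X _ (by omega)
  · rcases lt_trichotomy i m with him | rfl | him
    · simpa [him.le, Nat.succ_le_of_lt him] using hct i him
    · simpa [hcm, hc'₀] using hc't 0 (by omega)
    · have hstep : i + 1 - m = i - m + 1 := by omega
      simpa [him.not_ge, (him.trans i.lt_succ_self).not_ge, hstep] using hc't (i - m) (by omega)

lemma clusterEquiv_equivalence (X : Set (EuclideanSpace ℝ (Fin d))) (ρ : ℝ) :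
    Equivalence (ClusterEquiv X ρ) where
  refl _ := ⟨IsometryEquiv.refl _, rfl, Set.image_id _⟩
  symm := by
    rintro x y ⟨g, hgx, hg⟩
    refine ⟨g.symm, g.symm_apply_eq.2 hgx.symm, ?_⟩
    simp only [← hg, Set.image_image, IsometryEquiv.symm_apply_apply, Set.image_id']
  trans := by
    rintro x y z ⟨g, hgx, hg⟩ ⟨g', hgy, hg'⟩
    refine ⟨g.trans g', by simp only [IsometryEquiv.trans_apply, hgx, hgy], ?_⟩
    rw [← hg', ← hg, Set.image_image]
    rfl

lemma ClusterEquiv.exists_dist_eq (h : ClusterEquiv X ρ x y) (hz : z ∈ cluster X x ρ) :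
    ∃ w ∈ cluster X y ρ, dist w y = dist z x := by
  obtain ⟨g, rfl, hg⟩ := h
  exact ⟨g z, hg ▸ Set.mem_image_of_mem g hz, g.dist_eq z x⟩

lemma finite_quot_clusterEquiv {S : Set (EuclideanSpace ℝ (Fin d))} (hS : S.Finite)
    (h : ∀ x ∈ X, ∃ y ∈ X ∩ S, ClusterEquiv X ρ y x) :
    Finite (Quot fun a b : X => ClusterEquiv X ρ (a : EuclideanSpace ℝ (Fin d)) b) := by
  have : Finite ↥(X ∩ S) := hS.inter_of_right X
  refine Finite.of_surjective (fun y : ↥(X ∩ S) => Quot.mk _ ⟨y, y.2.1⟩) ?_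
  rintro ⟨x, hx⟩
  obtain ⟨y, hy, hyx⟩ := h x hx
  exact ⟨⟨y, hy⟩, Quot.sound hyx⟩

lemma infinite_quot_clusterEquiv {ι : Type*} [Infinite ι] (f : ι → X)
    (h : ∀ i j, ClusterEquiv X ρ (f i) (f j) → i = j) :
    Infinite (Quot fun a b : X => ClusterEquiv X ρ (a : EuclideanSpace ℝ (Fin d)) b) := by
  refine Infinite.of_injective (fun i => Quot.mk _ (f i)) fun i j hij => h i j ?_
  exact (((clusterEquiv_equivalence X ρ).comap Subtype.val).quot_mk_eq_iff _ _).1 hij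

end General

section Approximation

variable {α : ℝ}

lemma irrational_mul_intCast_eq_intCast_iff (hα : Irrational α) {m n : ℤ} :
    α * m = n ↔ m = 0 ∧ n = 0 := by
  refine ⟨fun h => ?_, by rintro ⟨rfl, rfl⟩; simp⟩
  have hm : m = 0 := by_contra fun hm => (hα.mul_intCast hm).ne_int n h
  refine ⟨hm, ?_⟩
  simpa [hm, eq_comm] using h

lemma eq_or_eq_neg_of_abs_irrational_mul_sub_eq (hα : Irrational α) {m n m' n' : ℤ}
    (h : |α * m - n| = |α * m' - n'|) : n = n' ∨ n = -n' := by
  rcases abs_eq_abs.1 h with h | h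
  · have hdiff : α * (m - m' : ℤ) = (n - n' : ℤ) := by push_cast; linarith
    have := ((irrational_mul_intCast_eq_intCast_iff hα).1 hdiff).2
    omega
  · have hsum : α * (m + m' : ℤ) = (n + n' : ℤ) := by push_cast; linarith
    have := ((irrational_mul_intCast_eq_intCast_iff hα).1 hsum).2
    omega

/-- The multiples of a point of the (compact) circle `ℝ / ℤ` come back arbitrarily close to zero. -/
lemma frequently_abs_mul_sub_round_lt (α : ℝ) {η : ℝ} (hη : 0 < η) :
    ∃ᶠ m : ℕ in Filter.atTop, |α * m - round (α * m)| < η := by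
  have h := (mapClusterPt_zero_atTop_nsmul (α : UnitAddCircle)).frequently
    (ball_mem_nhds 0 hη)
  refine h.mono fun m hm => ?_
  rwa [dist_zero_right, ← AddCircle.coe_nsmul, UnitAddCircle.norm_eq, nsmul_eq_mul,
    mul_comm] at hm

lemma infinite_setOf_pos_exists_abs_mul_sub_lt (hα : α ≠ 0) {η : ℝ} (hη : 0 < η) :
    {n : ℤ | 0 < n ∧ ∃ m : ℤ, |α * m - n| < η}.Infinite := by
  refine Set.infinite_of_forall_exists_gt fun a => ?_
  have hlarge : ∀ᶠ m : ℕ in Filter.atTop, max (a : ℝ) 0 + 1 < |α| * m :=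
    (tendsto_natCast_atTop_atTop.const_mul_atTop (abs_pos.2 hα)).eventually_gt_atTop _
  obtain ⟨m, hmη, hm⟩ := ((frequently_abs_mul_sub_round_lt |α| hη).and_eventually hlarge).exists
  have hround : max (a : ℝ) 0 < round (|α| * m) := by
    linarith [(abs_le.1 (abs_sub_round (|α| * m))).2]
  have hpos : 0 < round (|α| * m) := by exact_mod_cast (le_max_right _ _).trans_lt hround
  have hgt : a < round (|α| * m) := by exact_mod_cast (le_max_left _ _).trans_lt hround
  refine ⟨round (|α| * m), ⟨hpos, ?_⟩, hgt⟩
  rcases abs_choice α with h | h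
  · exact ⟨m, by simpa [h] using hmη⟩
  · exact ⟨-m, by simpa [h] using hmη⟩

end Approximation

/-- The spacing of the row at height `j`, in units of `t`: only the row at height `k` has the
spacing `α`. -/
noncomputable def rowSpacing (α : ℝ) (k j : ℕ) : ℝ := if j = k then α else 1

/-- The point number `m` of the row at height `j`, where `t` is the unit of length. -/
noncomputable def rowPoint (t α : ℝ) (k : ℕ) (m : ℤ) (j : ℕ) : EuclideanSpace ℝ (Fin 2) :=
  !₂[rowSpacing α k j * m * t, j * t]

/-- The set witnessing the theorem: the full rows at heights `0` and `k`, joined by the column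
`m = 0`. -/
def bridgedRows (t α : ℝ) (k : ℕ) : Set (EuclideanSpace ℝ (Fin 2)) :=
  {p | ∃ (m : ℤ) (j : ℕ), j ≤ k ∧ (j = 0 ∨ j = k ∨ m = 0) ∧ rowPoint t α k m j = p}

section BridgedRows

variable {t α s : ℝ} {k j j' : ℕ} {m m' : ℤ}

lemma rowSpacing_self (α : ℝ) (k : ℕ) : rowSpacing α k k = α := if_pos rfl

lemma rowSpacing_zero (hk : k ≠ 0) : rowSpacing α k 0 = 1 := if_neg hk.symm

lemma abs_le_abs_rowSpacing (hα : |α| ≤ 1) (k j : ℕ) : |α| ≤ |rowSpacing α k j| := by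
  unfold rowSpacing; split_ifs <;> simp [hα]

lemma abs_rowSpacing_le_one (hα : |α| ≤ 1) (k j : ℕ) : |rowSpacing α k j| ≤ 1 := by
  unfold rowSpacing; split_ifs <;> simp [hα]

lemma rowPoint_mem_bridgedRows_of_row (hj : j = 0 ∨ j = k) :
    rowPoint t α k m j ∈ bridgedRows t α k :=
  ⟨m, j, by omega, by tauto, rfl⟩

lemma rowPoint_mem_bridgedRows_of_column (hj : j ≤ k) :
    rowPoint t α k 0 j ∈ bridgedRows t α k :=
  ⟨0, j, hj, by tauto, rfl⟩

lemma dist_rowPoint (ht : 0 ≤ t) (α : ℝ) (k : ℕ) (m m' : ℤ) (j j' : ℕ) :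
    dist (rowPoint t α k m j) (rowPoint t α k m' j') =
      √((rowSpacing α k j * m - rowSpacing α k j' * m') ^ 2 + ((j : ℝ) - j') ^ 2) * t := by
  rw [EuclideanSpace.dist_eq, Fin.sum_univ_two, ← Real.sqrt_mul_self ht,
    ← Real.sqrt_mul (by positivity), Real.sqrt_mul_self ht]
  simp only [rowPoint, Real.dist_eq, sq_abs, PiLp.toLp_apply, Matrix.cons_val_zero,
    Matrix.cons_val_one]
  congr 1
  ring

lemma dist_rowPoint_le_iff (ht : 0 < t) (hs : 0 ≤ s) :
    dist (rowPoint t α k m j) (rowPoint t α k m' j') ≤ s * t ↔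
      (rowSpacing α k j * m - rowSpacing α k j' * m') ^ 2 + ((j : ℝ) - j') ^ 2 ≤ s ^ 2 := by
  rw [dist_rowPoint ht.le, mul_le_mul_iff_left₀ ht, Real.sqrt_le_left hs]

lemma dist_rowPoint_same_row (ht : 0 ≤ t) (α : ℝ) (k : ℕ) (m m' : ℤ) (j : ℕ) :
    dist (rowPoint t α k m j) (rowPoint t α k m' j) =
      |rowSpacing α k j| * |(m : ℝ) - m'| * t := by
  rw [dist_rowPoint ht, sub_self, zero_pow two_ne_zero, add_zero, Real.sqrt_sq_eq_abs, ← mul_sub,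
    abs_mul]

lemma abs_sub_mul_le_dist_rowPoint (ht : 0 ≤ t) (α : ℝ) (k : ℕ) (m m' : ℤ) (j j' : ℕ) :
    |(j : ℝ) - j'| * t ≤ dist (rowPoint t α k m j) (rowPoint t α k m' j') := by
  rw [dist_rowPoint ht]
  gcongr
  exact Real.abs_le_sqrt (le_add_of_nonneg_left (sq_nonneg _))

lemma uniformlyDiscrete_bridgedRows (ht : 0 < t) (hα₀ : α ≠ 0) (hα₁ : |α| ≤ 1) (k : ℕ) :
    UniformlyDiscrete (bridgedRows t α k) := by
  refine .of_pairwise_le_dist (mul_pos (abs_pos.2 hα₀) ht) ?_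
  rintro _ ⟨m, j, -, -, rfl⟩ _ ⟨m', j', -, -, rfl⟩ hne
  rcases eq_or_ne j j' with rfl | hj
  · have hm : m ≠ m' := by rintro rfl; exact hne rfl
    rw [dist_rowPoint_same_row ht.le]
    gcongr
    calc |α| ≤ |rowSpacing α k j| := abs_le_abs_rowSpacing hα₁ k j
      _ ≤ |rowSpacing α k j| * |(m : ℝ) - m'| :=
        le_mul_of_one_le_right (abs_nonneg _) (Int.pairwise_one_le_dist hm)
  · calc |α| * t ≤ |(j : ℝ) - j'| * t :=
        mul_le_mul_of_nonneg_right (hα₁.trans (Nat.pairwise_one_le_dist hj)) ht.le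
      _ ≤ _ := abs_sub_mul_le_dist_rowPoint ht.le α k m m' j j'

lemma affineSpan_bridgedRows (ht : t ≠ 0) (hk : k ≠ 0) :
    affineSpan ℝ (bridgedRows t α k) = ⊤ := by
  refine eq_top_iff.2 fun p _ => ?_
  have origin : rowPoint t α k 0 0 ∈ affineSpan ℝ (bridgedRows t α k) :=
    subset_affineSpan ℝ _ (rowPoint_mem_bridgedRows_of_row (.inl rfl))
  have right : rowPoint t α k 1 0 ∈ affineSpan ℝ (bridgedRows t α k) :=
    subset_affineSpan ℝ _ (rowPoint_mem_bridgedRows_of_row (.inl rfl))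
  have above : rowPoint t α k 0 1 ∈ affineSpan ℝ (bridgedRows t α k) :=
    subset_affineSpan ℝ _ (rowPoint_mem_bridgedRows_of_column (Nat.one_le_iff_ne_zero.2 hk))
  have hp : p = (p 0 / t) • (rowPoint t α k 1 0 -ᵥ rowPoint t α k 0 0) +ᵥ
      ((p 1 / t) • (rowPoint t α k 0 1 -ᵥ rowPoint t α k 0 0) +ᵥ rowPoint t α k 0 0) := by
    ext i
    fin_cases i <;> simp [rowPoint, rowSpacing_zero hk, ht]
  rw [hp]
  exact AffineSubspace.smul_vsub_vadd_mem _ _ right origin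
    (AffineSubspace.smul_vsub_vadd_mem _ _ above origin origin)

lemma tChain_row (ht : 0 ≤ t) (hα : |α| ≤ 1) (hj : j = 0 ∨ j = k) (m : ℤ) :
    TChain (bridgedRows t α k) t (rowPoint t α k 0 j) (rowPoint t α k m j) := by
  refine ⟨m.natAbs, fun i => rowPoint t α k (m.sign * i) j, by simp,
    by simp only [Int.sign_mul_natAbs], fun i _ => rowPoint_mem_bridgedRows_of_row hj,
    fun i _ => ?_⟩
  have hsign : |(m.sign : ℝ)| ≤ 1 := by
    rcases m.sign_trichotomy with h | h | h <;> simp [h]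
  have hsub : ((m.sign * i : ℤ) : ℝ) - (m.sign * (i + 1 : ℕ) : ℤ) = -m.sign := by
    push_cast; ring
  rw [dist_rowPoint_same_row ht, hsub, abs_neg]
  exact mul_le_of_le_one_left ht
    (mul_le_one₀ (abs_rowSpacing_le_one hα k j) (abs_nonneg _) hsign)

lemma tChain_column (ht : 0 ≤ t) (hj : j ≤ k) :
    TChain (bridgedRows t α k) t (rowPoint t α k 0 0) (rowPoint t α k 0 j) :=
  ⟨j, fun i => rowPoint t α k 0 i, rfl, rfl,
    fun _ hi => rowPoint_mem_bridgedRows_of_column (hi.trans hj),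
    fun i _ => by simp [dist_rowPoint ht]⟩

lemma tChain_origin (ht : 0 ≤ t) (hα : |α| ≤ 1) {x : EuclideanSpace ℝ (Fin 2)}
    (hx : x ∈ bridgedRows t α k) : TChain (bridgedRows t α k) t (rowPoint t α k 0 0) x := by
  obtain ⟨m, j, hjk, hj | hj | rfl, rfl⟩ := hx
  · exact (tChain_column ht hjk).trans (tChain_row ht hα (.inl hj) m)
  · exact (tChain_column ht hjk).trans (tChain_row ht hα (.inr hj) m)
  · exact tChain_column ht hjk

lemma tBonded_bridgedRows (ht : 0 < t) (hα₀ : α ≠ 0) (hα₁ : |α| ≤ 1) (hk : k ≠ 0) :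
    TBonded (bridgedRows t α k) t :=
  ⟨uniformlyDiscrete_bridgedRows ht hα₀ hα₁ k, affineSpan_bridgedRows ht.ne' hk,
    fun _ hx _ hy => (tChain_origin ht.le hα₁ hx).symm.trans (tChain_origin ht.le hα₁ hy)⟩

lemma ne_zero_of_dist_rowPoint_le (ht : 0 < t) (hm : k < |rowSpacing α k j * m|)
    (hd : dist (rowPoint t α k m' j') (rowPoint t α k m j) ≤ k * t) : m' ≠ 0 := by
  rintro rfl
  refine hm.not_ge (abs_le.2 (abs_le_of_sq_le_sq' ?_ k.cast_nonneg))
  rw [dist_rowPoint_le_iff ht k.cast_nonneg, Int.cast_zero, mul_zero, zero_sub, neg_sq] at hd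
  linarith [sq_nonneg ((j' : ℝ) - j)]

/-- The two rows are at distance `k * t`, so points of different rows can only be that close when
they lie on the same vertical line. -/
lemma eq_row_of_dist_rowPoint_le (ht : 0 < t) (hα : Irrational α) (hk : k ≠ 0) (hj : j = 0 ∨ j = k)
    (hm : m ≠ 0) (hj' : j' = 0 ∨ j' = k) (hm' : m' ≠ 0)
    (hd : dist (rowPoint t α k m' j') (rowPoint t α k m j) ≤ k * t) : j' = j := by
  rw [dist_rowPoint_le_iff ht k.cast_nonneg] at hd
  by_contra hne
  have hheight : ((j' : ℝ) - j) ^ 2 = k ^ 2 := by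
    rcases hj with rfl | rfl <;> rcases hj' with rfl | rfl <;> simp at hne ⊢
  have habscissa : rowSpacing α k j' * m' = rowSpacing α k j * m := by
    rw [hheight] at hd
    exact sub_eq_zero.1 (pow_eq_zero_iff two_ne_zero |>.1
      (le_antisymm (by linarith) (sq_nonneg _)))
  rcases hj with rfl | rfl <;> rcases hj' with rfl | rfl
  · exact hne rfl
  · rw [rowSpacing_self, rowSpacing_zero hk, one_mul] at habscissa
    exact hm ((irrational_mul_intCast_eq_intCast_iff hα).1 habscissa).2
  · rw [rowSpacing_self, rowSpacing_zero hk, one_mul] at habscissa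
    exact hm' ((irrational_mul_intCast_eq_intCast_iff hα).1 habscissa.symm).2
  · exact hne rfl

lemma cluster_rowPoint_of_lt_abs (ht : 0 < t) (hα : Irrational α) (hk : k ≠ 0)
    (hj : j = 0 ∨ j = k) (hm : k < |rowSpacing α k j * m|) :
    cluster (bridgedRows t α k) (rowPoint t α k m j) (k * t) =
      (fun i : ℤ => rowPoint t α k (m + i) j) '' {i : ℤ | |rowSpacing α k j| * |(i : ℝ)| ≤ k} := by
  have hmem (i : ℤ) : dist (rowPoint t α k (m + i) j) (rowPoint t α k m j) ≤ k * t ↔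
      |rowSpacing α k j| * |(i : ℝ)| ≤ k := by
    rw [dist_rowPoint_same_row ht.le, Int.cast_add, add_sub_cancel_left, mul_le_mul_iff_left₀ ht]
  ext p
  constructor
  · rintro ⟨⟨m', j', -, hmj', rfl⟩, hd⟩
    rw [mem_closedBall] at hd
    have hm₀ : m ≠ 0 := by
      rintro rfl
      simp only [Int.cast_zero, mul_zero, abs_zero] at hm
      exact hm.not_ge k.cast_nonneg
    have hm'₀ : m' ≠ 0 := ne_zero_of_dist_rowPoint_le ht hm hd
    have hj' : j' = 0 ∨ j' = k := by tauto
    obtain rfl := eq_row_of_dist_rowPoint_le ht hα hk hj hm₀ hj' hm'₀ hd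
    exact ⟨m' - m, (hmem _).1 (by rwa [add_sub_cancel]), by simp only [add_sub_cancel]⟩
  · rintro ⟨i, hi, rfl⟩
    exact ⟨rowPoint_mem_bridgedRows_of_row hj, (hmem i).2 hi⟩

lemma rowPoint_add_sub (t α : ℝ) (k : ℕ) (m m' i : ℤ) (j : ℕ) :
    rowPoint t α k (m + i) j + (rowPoint t α k m' j - rowPoint t α k m j) =
      rowPoint t α k (m' + i) j := by
  ext l
  fin_cases l
  · simp only [rowPoint, Int.cast_add, Fin.zero_eta, PiLp.add_apply, PiLp.sub_apply,
      PiLp.toLp_apply, Matrix.cons_val_zero]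
    ring
  · simp [rowPoint]

lemma clusterEquiv_rowPoint (ht : 0 < t) (hα : Irrational α) (hk : k ≠ 0) (hj : j = 0 ∨ j = k)
    (hm : k < |rowSpacing α k j * m|) (hm' : k < |rowSpacing α k j * m'|) :
    ClusterEquiv (bridgedRows t α k) (k * t) (rowPoint t α k m j) (rowPoint t α k m' j) := by
  refine ⟨IsometryEquiv.addRight (rowPoint t α k m' j - rowPoint t α k m j), by simp, ?_⟩
  rw [cluster_rowPoint_of_lt_abs ht hα hk hj hm, cluster_rowPoint_of_lt_abs ht hα hk hj hm',
    Set.image_image]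
  simp only [IsometryEquiv.addRight_apply, rowPoint_add_sub]

lemma finite_clusters_bridgedRows (ht : 0 < t) (hα : Irrational α) (hα₁ : |α| ≤ 1) (hk : k ≠ 0) :
    Finite (Quot fun a b : bridgedRows t α k =>
      ClusterEquiv (bridgedRows t α k) (k * t) (a : EuclideanSpace ℝ (Fin 2)) b) := by
  have hα_pos : 0 < |α| := abs_pos.2 hα.ne_zero
  obtain ⟨B, hB⟩ := exists_nat_gt (k / |α|)
  rw [div_lt_iff₀' hα_pos] at hB
  have hfar {n : ℤ} (j : ℕ) (hn : (B : ℤ) ≤ |n|) : k < |rowSpacing α k j * n| :=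
    calc (k : ℝ) < |α| * B := hB
      _ ≤ |rowSpacing α k j| * |(n : ℝ)| :=
        mul_le_mul (abs_le_abs_rowSpacing hα₁ k j) (by exact_mod_cast hn) B.cast_nonneg
          (abs_nonneg _)
      _ = |rowSpacing α k j * n| := (abs_mul _ _).symm
  have hfinite : (Set.image2 (rowPoint t α k) (Set.Icc (-B) B) (Set.Iic k)).Finite :=
    (Set.finite_Icc _ _).image2 _ (Set.finite_Iic k)
  refine finite_quot_clusterEquiv hfinite ?_
  rintro _ ⟨m, j, hjk, hj, rfl⟩
  by_cases hm : m ∈ Set.Icc (-B : ℤ) B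
  · exact ⟨rowPoint t α k m j, ⟨⟨m, j, hjk, hj, rfl⟩, Set.mem_image2_of_mem hm hjk⟩,
      (clusterEquiv_equivalence _ _).refl _⟩
  · have hrow : j = 0 ∨ j = k := by
      rcases hj with hj | hj | rfl
      exacts [.inl hj, .inr hj, (hm (by simp)).elim]
    have hBm : (B : ℤ) ≤ |m| := (not_le.1 (mt abs_le.1 hm)).le
    exact ⟨rowPoint t α k B j, ⟨rowPoint_mem_bridgedRows_of_row hrow,
      Set.mem_image2_of_mem (by simp) hjk⟩,
      clusterEquiv_rowPoint ht hα hk hrow (hfar j (le_abs_self _)) (hfar j hBm)⟩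

/-- Seen from the lower row, all points outside the upper row have integral squared distances in
units of `t ^ 2`. -/
lemma exists_abs_sub_eq_of_dist_eq (ht : 0 < t) (hk : k ≠ 0) {n : ℤ} {δ : ℝ} (hδ₀ : 0 < δ)
    (hδ₁ : δ < 1) {p : EuclideanSpace ℝ (Fin 2)} (hp : p ∈ bridgedRows t α k)
    (hd : dist p (rowPoint t α k n 0) = √(δ ^ 2 + k ^ 2) * t) : ∃ m : ℤ, |α * m - n| = δ := by
  obtain ⟨m, j, -, hj, rfl⟩ := hp
  rw [dist_rowPoint ht.le, mul_left_inj' ht.ne', Real.sqrt_inj (by positivity) (by positivity),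
    rowSpacing_zero hk, one_mul, Nat.cast_zero, sub_zero] at hd
  have hnot_int (a : ℤ) : (a : ℝ) ≠ δ ^ 2 + k ^ 2 := by
    intro ha
    have hδ_sq : δ ^ 2 < 1 := pow_lt_one₀ hδ₀.le hδ₁ two_ne_zero
    have hlower : (k : ℤ) ^ 2 < a := by
      rify
      linarith [pow_pos hδ₀ 2]
    have hupper : a < (k : ℤ) ^ 2 + 1 := by
      rify
      linarith
    omega
  rcases hj with rfl | rfl | rfl
  · refine (hnot_int ((m - n) ^ 2) ?_).elim
    rw [← hd, rowSpacing_zero hk]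
    push_cast
    ring
  · refine ⟨m, ?_⟩
    rw [rowSpacing_self, add_left_inj] at hd
    rw [← abs_of_pos hδ₀]
    exact (sq_eq_sq_iff_abs_eq_abs _ _).1 hd
  · refine (hnot_int (n ^ 2 + j ^ 2) ?_).elim
    rw [← hd]
    push_cast
    ring

lemma eq_of_clusterEquiv_rowPoint (ht : 0 < t) (hα : Irrational α) (hk : k ≠ 0) (hs : 0 ≤ s)
    {n n' : ℤ} (hn : 0 < n) (hn' : 0 < n') (hmn₁ : |α * m - n| < 1)
    (hmns : |α * m - n| ^ 2 + k ^ 2 ≤ s ^ 2)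
    (h : ClusterEquiv (bridgedRows t α k) (s * t) (rowPoint t α k n 0) (rowPoint t α k n' 0)) :
    n = n' := by
  have hpos : 0 < |α * m - n| :=
    abs_pos.2 fun h₀ => hn.ne' ((irrational_mul_intCast_eq_intCast_iff hα).1 (sub_eq_zero.1 h₀)).2
  have hdist : dist (rowPoint t α k m k) (rowPoint t α k n 0) =
      √(|α * m - n| ^ 2 + k ^ 2) * t := by
    rw [dist_rowPoint ht.le, rowSpacing_self, rowSpacing_zero hk, one_mul, Nat.cast_zero, sub_zero,
      sq_abs]
  have hmem : rowPoint t α k m k ∈ cluster (bridgedRows t α k) (rowPoint t α k n 0) (s * t) := by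
    refine ⟨rowPoint_mem_bridgedRows_of_row (.inr rfl), ?_⟩
    rw [mem_closedBall, hdist]
    gcongr
    exact (Real.sqrt_le_left hs).2 hmns
  obtain ⟨p, ⟨hp, -⟩, hpd⟩ := h.exists_dist_eq hmem
  obtain ⟨m', hm'⟩ := exists_abs_sub_eq_of_dist_eq ht hk hpos hmn₁ hp (hpd.trans hdist)
  rcases eq_or_eq_neg_of_abs_irrational_mul_sub_eq hα hm' with h | h <;> omega

lemma infinite_clusters_bridgedRows (ht : 0 < t) (hα : Irrational α) (hk : k ≠ 0) (hs : k < s) :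
    Infinite (Quot fun a b : bridgedRows t α k =>
      ClusterEquiv (bridgedRows t α k) (s * t) (a : EuclideanSpace ℝ (Fin 2)) b) := by
  have hη : 0 < min 1 (s - k) := lt_min one_pos (sub_pos.2 hs)
  have := (infinite_setOf_pos_exists_abs_mul_sub_lt hα.ne_zero hη).to_subtype
  refine infinite_quot_clusterEquiv
    (fun n : {n : ℤ | 0 < n ∧ ∃ m : ℤ, |α * m - n| < min 1 (s - k)} =>
      ⟨rowPoint t α k n 0, rowPoint_mem_bridgedRows_of_row (.inl rfl)⟩) ?_
  rintro ⟨n, hn, m, hm⟩ ⟨n', hn', _⟩ h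
  obtain ⟨hm₁, hms⟩ := lt_min_iff.1 hm
  have hseen : |α * m - n| ^ 2 + (k : ℝ) ^ 2 ≤ s ^ 2 :=
    calc |α * m - n| ^ 2 + (k : ℝ) ^ 2 ≤ (|α * m - n| + k) ^ 2 :=
        pow_add_pow_le (abs_nonneg _) k.cast_nonneg two_ne_zero
      _ ≤ s ^ 2 := by gcongr; linarith
  exact Subtype.ext
    (eq_of_clusterEquiv_rowPoint ht hα hk (k.cast_nonneg.trans hs.le) hn hn' hm₁ hseen h)

end BridgedRows

/-- For every `t > 0` and every `M > 0` there are `k > M` and a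
`t`-bonded set `X ⊆ ℝ²` with finitely many classes of `kt`-clusters but infinitely
many classes of `(kt + ε)`-clusters for every `ε > 0`. -/
theorem exists_t_bonded_not_finite_type (t M : ℝ) (ht : 0 < t) (hM : 0 < M) :
    ∃ k : ℝ, M < k ∧ ∃ X : Set (EuclideanSpace ℝ (Fin 2)),
      TBonded X t ∧
      Finite (Quot fun a b : X =>
        ClusterEquiv X (k * t) (a : EuclideanSpace ℝ (Fin 2)) b) ∧
      ∀ ε > 0, Infinite (Quot fun a b : X =>
        ClusterEquiv X (k * t + ε) (a : EuclideanSpace ℝ (Fin 2)) b) := by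
  obtain ⟨k, hMk⟩ := exists_nat_gt M
  have hk : k ≠ 0 := by
    rintro rfl
    exact hM.not_gt (by simpa using hMk)
  obtain ⟨α, hα, hα₀, hα₁⟩ := exists_irrational_btwn zero_lt_one
  have hα_abs : |α| ≤ 1 := (abs_of_pos hα₀).trans_le hα₁.le
  refine ⟨k, hMk, bridgedRows t α k, tBonded_bridgedRows ht hα.ne_zero hα_abs hk,
    finite_clusters_bridgedRows ht hα hα_abs hk, fun ε hε => ?_⟩
  have hradius : k * t + ε = (k + ε / t) * t := by field_simp
  rw [hradius]
  exact infinite_clusters_bridgedRows ht hα hk (lt_add_of_pos_right _ (div_pos hε ht))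
end
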